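/- arXiv:2212.08644 — 4 statements merged into one kernel-verified Lean document; each statement's English description precedes it below -/
import Mathlib

section
/- Spreading out flatness over a Henselian pair: let (A, I) be a Henselian pair and let R be a finitely presented A-algebra such that for every prime ideal q of R containing I·R, the localization R_q of R at q is flat as an A-module (i.e. Spec R → Spec A is flat at every point of V(I·R)). Then there exists an étale R-algebra R′ such that the induced map R/(I·R) → R′/(I·R′) is an isomorphism and R′ is flat as an A-module. -/
universe u

/-- A ring homomorphism `ρ : R →+* H` exhibits `H` as a Henselization of the pair `(R, K)`:
`(H, K·H)` is a Henselian pair, and every map from `(R, K)` to a Henselian pair factors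
uniquely through `ρ`. -/
def IsHenselization {R H : Type u} [CommRing R] [CommRing H]
    (K : Ideal R) (ρ : R →+* H) : Prop :=
  HenselianRing H (K.map ρ) ∧
    ∀ (C : Type u) [CommRing C] (J : Ideal C), HenselianRing C J →
      ∀ f : R →+* C, K.map f ≤ J → ∃! g : H →+* C, g.comp ρ = f

/-- `φ : A →+* B` is Henselian finitely presented (hfp) with respect to `I`:
`B` is a Henselization of `(R, I·R)` for some finitely presented `A`-algebra `R`. -/
def IsHfp {A B : Type u} [CommRing A] [CommRing B] (φ : A →+* B) (I : Ideal A) : Prop :=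
  ∃ (R : Type u) (_ : CommRing R) (ψ : A →+* R) (ρ : R →+* B),
    ψ.FinitePresentation ∧ ρ.comp ψ = φ ∧ IsHenselization (I.map ψ) ρ

/-- `φ : A →+* B` is h-formally étale with respect to `I`. -/
def IsHFormallyEtale {A B : Type u} [CommRing A] [CommRing B] (φ : A →+* B) (I : Ideal A) :
    Prop :=
  ∀ (E C : Type u) [CommRing E] [CommRing C] (e : A →+* E) (c : A →+* C)
    (p : E →+* C) (u : B →+* C),
    p.comp e = c → u.comp φ = c →
    (∃ N : ℕ, 1 ≤ N ∧ Ideal.map e (I ^ N) = ⊥ ∧ Ideal.map c (I ^ N) = ⊥) →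
    Function.Surjective p →
    (∃ M : ℕ, 1 ≤ M ∧ RingHom.ker p ^ M = ⊥) →
    ∃! v : B →+* E, v.comp φ = e ∧ p.comp v = u

/-- `φ : A →+* B` is h-formally smooth with respect to `I`. -/
def IsHFormallySmooth {A B : Type u} [CommRing A] [CommRing B] (φ : A →+* B) (I : Ideal A) :
    Prop :=
  ∀ (E C : Type u) [CommRing E] [CommRing C] (e : A →+* E) (c : A →+* C)
    (p : E →+* C) (u : B →+* C),
    p.comp e = c → u.comp φ = c →
    (∃ N : ℕ, 1 ≤ N ∧ Ideal.map e (I ^ N) = ⊥ ∧ Ideal.map c (I ^ N) = ⊥) →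
    Function.Surjective p →
    (∃ M : ℕ, 1 ≤ M ∧ RingHom.ker p ^ M = ⊥) →
    ∃ v : B →+* E, v.comp φ = e ∧ p.comp v = u

/-- `φ : A →+* B` is h-étale with respect to `I`: `B` is a Henselization of `(R, I·R)`
for some étale `A`-algebra `R`. -/
def IsHEtale {A B : Type u} [CommRing A] [CommRing B] (φ : A →+* B) (I : Ideal A) : Prop :=
  ∃ (R : Type u) (_ : CommRing R) (_ : Algebra A R) (ρ : R →+* B),
    Algebra.Etale A R ∧ ρ.comp (algebraMap A R) = φ ∧
      IsHenselization (I.map (algebraMap A R)) ρ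

/-- `φ : A →+* B` is h-smooth with respect to `I`: `B` is a Henselization of `(R, I·R)`
for some smooth `A`-algebra `R`. -/
def IsHSmooth {A B : Type u} [CommRing A] [CommRing B] (φ : A →+* B) (I : Ideal A) : Prop :=
  ∃ (R : Type u) (_ : CommRing R) (_ : Algebra A R) (ρ : R →+* B),
    Algebra.Smooth A R ∧ ρ.comp (algebraMap A R) = φ ∧
      IsHenselization (I.map (algebraMap A R)) ρ

/-- A ring homomorphism is flat if it makes the target into a flat module over the source. -/
def RingHomFlat {A C : Type u} [CommRing A] [CommRing C] (f : A →+* C) : Prop :=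
  letI := f.toAlgebra
  Module.Flat A C

/-- A ring homomorphism is smooth if it makes the target into a smooth algebra over the
source (smooth = formally smooth + finitely presented). -/
def RingHomSmooth {A C : Type u} [CommRing A] [CommRing C] (f : A →+* C) : Prop :=
  letI := f.toAlgebra
  Algebra.Smooth A C

/-- A ring homomorphism is étale if it makes the target into an étale algebra over the
source (étale = formally étale + finitely presented). -/
def RingHomEtale {A C : Type u} [CommRing A] [CommRing C] (f : A →+* C) : Prop :=
  letI := f.toAlgebra
  Algebra.Etale A C

section Helpers
open TensorProduct

/-- kernel of `M ⊗ Y → M ⊗ X` is `S`-torsion -/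
def KT {A R : Type u} [CommRing A] [CommRing R] [Algebra A R] (M : Type u) [AddCommGroup M]
    [Module A M] [Module R M] [IsScalarTower A R M] (S : Submonoid R) {Y X : Type u}
    [AddCommMonoid Y] [Module A Y] [AddCommMonoid X] [Module A X] (f : Y →ₗ[A] X) : Prop :=
  ∀ x : M ⊗[A] Y, f.lTensor M x = 0 → ∃ s ∈ S, s • x = 0

section E
variable {A R : Type u} [CommRing A] [CommRing R] [Algebra A R] (M : Type u) [AddCommGroup M]
    [Module A M] [Module R M] [IsScalarTower A R M] (S : Submonoid R) {Y X : Type u}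
    [AddCommGroup Y] [Module A Y] [AddCommGroup X] [Module A X] (f : Y →ₗ[A] X)

theorem lTensor_smul_R {Y X : Type u}
    [AddCommMonoid Y] [Module A Y] [AddCommMonoid X] [Module A X] (f : Y →ₗ[A] X) (s : R) (x : M ⊗[A] Y) : f.lTensor M (s • x) = s • f.lTensor M x := by
  have := (AlgebraTensorModule.lTensor R M f).map_smul s x
  exact this

theorem KT_iff (L : Type u) [AddCommGroup L] [Module A L] [Module R L] [IsScalarTower A R L]
    (g : M →ₗ[R] L) [IsLocalizedModule S g] :
    KT M S f ↔ Function.Injective (f.lTensor L) := by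
  have e : ∀ x : M ⊗[A] Y, f.lTensor L (AlgebraTensorModule.rTensor A Y g x) =
      AlgebraTensorModule.rTensor A X g (f.lTensor M x) := by
    intro x
    induction x with
    | zero => simp
    | tmul a b => simp
    | add a b ha hb => rw [map_add, map_add, map_add, map_add, ha, hb]
  constructor
  · intro h
    rw [injective_iff_map_eq_zero]
    intro z hz
    obtain ⟨⟨x, s⟩, hx⟩ := IsLocalizedModule.surj S (AlgebraTensorModule.rTensor A Y g) z
    simp only at hx
    have h1 : AlgebraTensorModule.rTensor A X g (f.lTensor M x) = 0 := by
      rw [← e, ← hx]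
      have : f.lTensor L ((s : R) • z) = 0 := by rw [lTensor_smul_R, hz, smul_zero]
      exact this
    obtain ⟨t, ht⟩ := (IsLocalizedModule.eq_zero_iff S _).1 h1
    have h2 : f.lTensor M ((t : R) • x) = 0 := by rw [lTensor_smul_R]; exact ht
    obtain ⟨r, hr, hr'⟩ := h _ h2
    have h3 : AlgebraTensorModule.rTensor A Y g x = 0 := by
      rw [IsLocalizedModule.eq_zero_iff S]
      exact ⟨⟨r, hr⟩ * t, by rw [mul_smul]; exact hr'⟩
    rw [h3] at hx
    exact (IsLocalizedModule.smul_injective (AlgebraTensorModule.rTensor A Y g) s) (by simpa using hx)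
  · intro h x hx
    have h1 : AlgebraTensorModule.rTensor A Y g x = 0 := by
      apply h
      rw [e, hx]; simp
    obtain ⟨t, ht⟩ := (IsLocalizedModule.eq_zero_iff S _).1 h1
    exact ⟨t, t.2, ht⟩

theorem KT_of_flat (L : Type u) [AddCommGroup L] [Module A L] [Module R L] [IsScalarTower A R L]
    (g : M →ₗ[R] L) [IsLocalizedModule S g] [Module.Flat A L] (hf : Function.Injective f) :
    KT M S f :=
  (KT_iff M S f L g).2 (Module.Flat.lTensor_preserves_injective_linearMap f hf)

theorem flat_of_KT (L : Type u) [AddCommGroup L] [Module A L] [Module R L] [IsScalarTower A R L]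
    (g : M →ₗ[R] L) [IsLocalizedModule S g]
    (h : ∀ a : Ideal A, KT M S a.subtype) : Module.Flat A L := by
  rw [Module.Flat.iff_lTensor_injective']
  intro a
  exact (KT_iff M S a.subtype L g).1 (h a)

variable {S} in
theorem KT.mono {S' : Submonoid R} (hS : S ≤ S') (h : KT M S f) : KT M S' f := fun x hx =>
  let ⟨s, hs, h'⟩ := h x hx; ⟨s, hS hs, h'⟩

end E


section L
variable {A R : Type u} [CommRing A] [CommRing R] [Algebra A R]
    (S : Submonoid R) (I : Ideal A)

theorem KT_comp {M : Type u} [AddCommGroup M]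
    [Module A M] [Module R M] [IsScalarTower A R M] {X Y Z : Type u} [AddCommGroup X] [Module A X] [AddCommGroup Y] [Module A Y]
    [AddCommGroup Z] [Module A Z] (f : X →ₗ[A] Y) (g : Y →ₗ[A] Z) (hf : KT M S f) (hg : KT M S g) :
    KT M S (g ∘ₗ f) := by
  intro x hx
  rw [LinearMap.lTensor_comp, LinearMap.comp_apply] at hx
  obtain ⟨s, hs, h⟩ := hg _ hx
  rw [← lTensor_smul_R] at h
  obtain ⟨t, ht, h⟩ := hf _ h
  exact ⟨t * s, S.mul_mem ht hs, by rw [mul_smul, h]⟩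

theorem KT_of_inj {M : Type u} [AddCommGroup M]
    [Module A M] [Module R M] [IsScalarTower A R M] {X Y : Type u} [AddCommGroup X] [Module A X] [AddCommGroup Y] [Module A Y]
    (f : X →ₗ[A] Y) (h : Function.Injective (f.lTensor M)) : KT M S f := fun x hx =>
  ⟨1, S.one_mem, by rw [one_smul]; exact (injective_iff_map_eq_zero _).1 h _ hx⟩

theorem KT_finsupp (h1 : KT R S I.subtype) (X : Type u) :
    KT R S (Finsupp.mapRange.linearMap (α := X) I.subtype) := by
  classical
  intro x hx
  let e := TensorProduct.finsuppRight A A R I X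
  let e' := TensorProduct.finsuppRight A A R A X
  have key : ∀ x i, e' ((Finsupp.mapRange.linearMap (α := X) I.subtype).lTensor R x) i =
      I.subtype.lTensor R (e x i) := by
    intro x i
    induction x with
    | zero => simp
    | tmul a b => simp [e, e', TensorProduct.finsuppRight_apply_tmul_apply]
    | add a b ha hb => simp [ha, hb]
  have smulkey : ∀ (s : R) (x : R ⊗[A] (X →₀ I)) i, e (s • x) i = s • e x i := by
    intro s x i
    induction x with
    | zero => simp
    | tmul a b => simp [e, TensorProduct.finsuppRight_apply_tmul_apply, TensorProduct.smul_tmul']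
    | add a b ha hb => simp [ha, hb]
  have h2 : ∀ i, ∃ s ∈ S, s • e x i = 0 := by
    intro i
    apply h1
    rw [← key, hx]; simp
  choose s hs hs' using h2
  refine ⟨∏ i ∈ (e x).support, s i, S.prod_mem (fun i _ => hs i), ?_⟩
  apply e.injective
  ext1 i
  rw [smulkey, map_zero, Finsupp.zero_apply]
  by_cases hi : i ∈ (e x).support
  · rw [← Finset.prod_erase_mul _ _ hi, mul_smul, hs', smul_zero]
  · rw [Finsupp.notMem_support_iff.1 hi, smul_zero]

theorem exists_free (h1 : KT R S I.subtype) (X : Type u) [AddCommGroup X] [Module A X] :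
    ∃ (E N : Type u) (_ : AddCommGroup E) (_ : Module A E) (_ : AddCommGroup N) (_ : Module A N)
      (π : E →ₗ[A] X) (f0 : N →ₗ[A] E), Function.Surjective π ∧ KT R S f0 ∧
      (∀ i ∈ I, ∀ x : E, i • x ∈ LinearMap.range f0) ∧
      ∀ (Y : Submodule A E), (∀ i ∈ I, ∀ x : E, i • x ∈ Y) → LinearMap.range f0 ≤ Y := by
  classical
  refine ⟨X →₀ A, X →₀ I, inferInstance, inferInstance, inferInstance, inferInstance,
    Finsupp.linearCombination A id, Finsupp.mapRange.linearMap (α := X) I.subtype,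
    Finsupp.linearCombination_surjective _ Function.surjective_id, KT_finsupp S I h1 X, ?_, ?_⟩
  · intro i hi x
    refine ⟨Finsupp.mapRange.linearMap (LinearMap.toSpanSingleton A I ⟨i, hi⟩) x, ?_⟩
    ext a
    simp [mul_comm]
  · intro Y hXY
    rintro _ ⟨z, rfl⟩
    induction z using Finsupp.induction_linear with
    | zero => simp
    | add a b ha hb => rw [map_add]; exact Y.add_mem ha hb
    | single a b =>
      have := hXY b b.2 (Finsupp.single a 1)
      simpa using this

theorem L_free
    (h2 : ∀ (X : Type u) [AddCommGroup X] [Module A X] (Y : Submodule A X),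
      (∀ i ∈ I, ∀ x : X, i • x = 0) → KT R S Y.subtype)
    {E N : Type u} [AddCommGroup E] [Module A E] [AddCommGroup N] [Module A N] (f0 : N →ₗ[A] E)
    (hf0 : KT R S f0) (Y : Submodule A E) (hf0' : ∀ i ∈ I, ∀ x : E, i • x ∈ LinearMap.range f0)
    (hr0 : LinearMap.range f0 ≤ Y) : KT R S Y.subtype := by
  intro y hy
  let j : N →ₗ[A] Y := f0.codRestrict Y (fun z => hr0 ⟨z, rfl⟩)
  let mk := (LinearMap.range f0).mkQ
  let W := Y.map mk
  let r : Y →ₗ[A] W := (mk ∘ₗ Y.subtype).codRestrict W (fun c => ⟨c, c.2, rfl⟩)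
  have hW : KT R S W.subtype := by
    apply h2
    intro i hi x
    obtain ⟨x, rfl⟩ := (LinearMap.range f0).mkQ_surjective x
    rw [← map_smul]
    change Submodule.Quotient.mk _ = _
    rw [Submodule.Quotient.mk_eq_zero]
    exact hf0' i hi x
  have hsurj : Function.Surjective r := by
    rintro ⟨_, c, hc, rfl⟩
    exact ⟨⟨c, hc⟩, rfl⟩
  have hex : Function.Exact j r := by
    intro c
    have : r c = 0 ↔ c.1 ∈ LinearMap.range f0 := by
      rw [← Submodule.Quotient.mk_eq_zero, ← Subtype.coe_inj]; rfl
    rw [this]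
    constructor
    · rintro ⟨z, hz⟩
      exact ⟨z, Subtype.ext hz⟩
    · rintro ⟨z, rfl⟩
      exact ⟨z, rfl⟩
  have e1 : W.subtype ∘ₗ r = mk ∘ₗ Y.subtype := rfl
  obtain ⟨s, hs, h⟩ := hW (r.lTensor R y) (by
    rw [← LinearMap.comp_apply, ← LinearMap.lTensor_comp, e1, LinearMap.lTensor_comp, LinearMap.comp_apply, hy, map_zero])
  rw [← lTensor_smul_R] at h
  obtain ⟨z, hz⟩ := ((lTensor_exact R hex hsurj) _).1 h
  obtain ⟨t, ht, h'⟩ := hf0 z (by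
    have : f0 = Y.subtype ∘ₗ j := rfl
    change f0.lTensor R z = 0
    rw [this, LinearMap.lTensor_comp, LinearMap.comp_apply, hz, lTensor_smul_R, hy, smul_zero])
  refine ⟨t * s, S.mul_mem ht hs, ?_⟩
  rw [mul_smul, ← hz, ← lTensor_smul_R, h', map_zero]

theorem L_step1 (h1 : KT R S I.subtype)
    (h2 : ∀ (X : Type u) [AddCommGroup X] [Module A X] (Y : Submodule A X),
      (∀ i ∈ I, ∀ x : X, i • x = 0) → KT R S Y.subtype)
    (X : Type u) [AddCommGroup X] [Module A X] (Y : Submodule A X)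
    (hXY : ∀ i ∈ I, ∀ x : X, i • x ∈ Y) : KT R S Y.subtype := by
  classical
  intro x hx
  obtain ⟨E, N, _, _, _, _, π, f0, hπ, hf0, hf0', hf1⟩ := exists_free S I h1 X
  let Y' := Y.comap π
  have hY' : KT R S Y'.subtype := L_free S I h2 f0 hf0 Y' hf0' (hf1 _ <| by
    intro i hi x
    change π (i • x) ∈ Y
    rw [map_smul]; exact hXY i hi _)
  let p : Y' →ₗ[A] Y := π.restrict (fun c hc => hc)
  have hp : Function.Surjective p := by
    rintro ⟨y, hy⟩
    obtain ⟨e, rfl⟩ := hπ y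
    exact ⟨⟨e, hy⟩, rfl⟩
  obtain ⟨x', rfl⟩ := LinearMap.lTensor_surjective R hp x
  have e1 : Y.subtype ∘ₗ p = π ∘ₗ Y'.subtype := rfl
  rw [← LinearMap.comp_apply, ← LinearMap.lTensor_comp, e1, LinearMap.lTensor_comp, LinearMap.comp_apply] at hx
  obtain ⟨k, hk⟩ := ((lTensor_exact (f := (LinearMap.ker π).subtype) (g := π) R (LinearMap.exact_subtype_ker_map π) hπ) _).1 hx
  have hle : LinearMap.ker π ≤ Y' := fun c hc => by
    change π c ∈ Y
    rw [LinearMap.mem_ker.1 hc]; exact Y.zero_mem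
  let inc := Submodule.inclusion hle
  have e2 : (LinearMap.ker π).subtype = Y'.subtype ∘ₗ inc := rfl
  obtain ⟨s, hs, h⟩ := hY' (x' - inc.lTensor R k) (by
    rw [map_sub, ← hk, e2, LinearMap.lTensor_comp, LinearMap.comp_apply, sub_self])
  refine ⟨s, hs, ?_⟩
  have e3 : p ∘ₗ inc = 0 := by
    ext1 c
    exact Subtype.ext (LinearMap.mem_ker.1 c.2)
  have := congrArg (p.lTensor R) h
  rwa [lTensor_smul_R, map_sub, ← LinearMap.comp_apply (p.lTensor R), ← LinearMap.lTensor_comp, e3, LinearMap.lTensor_zero, LinearMap.zero_apply, sub_zero, map_zero] at this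

theorem L_step2 (h1 : KT R S I.subtype)
    (h2 : ∀ (X : Type u) [AddCommGroup X] [Module A X] (Y : Submodule A X),
      (∀ i ∈ I, ∀ x : X, i • x = 0) → KT R S Y.subtype) (n : ℕ) :
    ∀ (Y X : Type u) [AddCommGroup X] [Module A X] [AddCommGroup Y] [Module A Y] (f : Y →ₗ[A] X),
    Function.Injective f →
    I ^ n • (⊤ : Submodule A X) ≤ LinearMap.range f → KT R S f := by
  induction n with
  | zero =>
    intro Y X _ _ _ _ f hf hXY
    have : Function.Surjective f := by
      rw [← LinearMap.range_eq_top]; simpa using hXY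
    exact KT_of_inj S f (LinearEquiv.lTensor R (LinearEquiv.ofBijective f ⟨hf, this⟩)).injective
  | succ n ih =>
    intro Y X _ _ _ _ f hf hXY
    let Z := LinearMap.range f ⊔ I • ⊤
    let f1 : Y →ₗ[A] Z := f.codRestrict Z (fun c => (le_sup_left : _ ≤ Z) ⟨c, rfl⟩)
    have e : f = Z.subtype ∘ₗ f1 := rfl
    rw [e]
    apply KT_comp
    · apply ih
      · intro a b hab
        exact hf (congrArg Subtype.val hab)
      · rw [← Submodule.map_le_map_iff_of_injective (Submodule.subtype_injective Z), Submodule.map_smul'',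
          ← LinearMap.range_comp, ← e]
        simp only [Submodule.map_top, Submodule.range_subtype, Z, Submodule.smul_sup]
        refine sup_le Submodule.smul_le_right ?_
        rw [← mul_smul, ← pow_succ]
        exact hXY
    · apply L_step1 S I h1 h2
      intro i hi x
      exact (le_sup_right : _ ≤ Z) (Submodule.smul_mem_smul hi trivial)

theorem L_mem (h1 : KT R S I.subtype) [IsNoetherianRing A]
    (h2 : ∀ (X : Type u) [AddCommGroup X] [Module A X] (Y : Submodule A X),
      (∀ i ∈ I, ∀ x : X, i • x = 0) → KT R S Y.subtype) (a : Ideal A)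
    (x : R ⊗[A] a) (hx : a.subtype.lTensor R x = 0) (m : ℕ) :
    ∃ s ∈ S, s • x ∈ (I.map (algebraMap A R)) ^ m • (⊤ : Submodule R (R ⊗[A] a)) := by
  obtain ⟨k, hk⟩ := Ideal.exists_pow_inf_eq_pow_smul I (M := A) a
  let n := m + k
  let g : a →ₗ[A] A ⧸ (I ^ n) := (Submodule.mkQ (I ^ n)) ∘ₗ a.subtype
  let W := LinearMap.range g
  have hW : KT R S W.subtype := by
    apply L_step2 S I h1 h2 n _ _ _ W.subtype_injective
    rw [Submodule.smul_le]
    intro r hr c _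
    obtain ⟨c, rfl⟩ := Submodule.mkQ_surjective _ c
    rw [← map_smul]
    have : (I ^ n).mkQ (r • c) = 0 := by
      change Submodule.Quotient.mk _ = _
      rw [Submodule.Quotient.mk_eq_zero]
      exact Ideal.mul_mem_right _ _ hr
    rw [this]; exact Submodule.zero_mem _
  let ρ := g.rangeRestrict
  have e1 : W.subtype ∘ₗ ρ = (Submodule.mkQ (I ^ n)) ∘ₗ a.subtype := rfl
  obtain ⟨s, hs, h⟩ := hW (ρ.lTensor R x) (by
    rw [← LinearMap.comp_apply, ← LinearMap.lTensor_comp, e1, LinearMap.lTensor_comp, LinearMap.comp_apply, hx, map_zero])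
  rw [← lTensor_smul_R] at h
  obtain ⟨z, hz⟩ := ((lTensor_exact R (LinearMap.exact_subtype_ker_map ρ) g.surjective_rangeRestrict) _).1 h
  refine ⟨s, hs, ?_⟩
  rw [← hz]
  clear hz h
  induction z with
  | zero => simp
  | add a b ha hb => rw [map_add]; exact Submodule.add_mem _ ha hb
  | tmul r c =>
    obtain ⟨c, hc⟩ := c
    simp only [LinearMap.lTensor_tmul, Submodule.subtype_apply]
    have hc1 : (c : A) ∈ I ^ n • (⊤ : Submodule A A) ⊓ a := by
      refine ⟨?_, c.2⟩
      have : g c = 0 := congrArg Subtype.val (LinearMap.mem_ker.1 hc)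
      have : Submodule.Quotient.mk (p := I ^ n) (c : A) = 0 := this
      rw [Submodule.Quotient.mk_eq_zero] at this
      simpa using this
    rw [hk n (by omega)] at hc1
    have hc2 : (c : A) ∈ I ^ m • (a : Submodule A A) := by
      have : n - k = m := by omega
      rw [this] at hc1
      exact Submodule.smul_mono le_rfl inf_le_right hc1
    have hc3 : c ∈ I ^ m • (⊤ : Submodule A a) := by
      have : (I ^ m • (⊤ : Submodule A a)).map (Submodule.subtype a) = I ^ m • (a : Submodule A A) := by
        rw [Submodule.map_smul'']; simp
      rw [← this] at hc2
      obtain ⟨c', h, h'⟩ := hc2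
      rwa [← Subtype.ext h']
    clear hc hc1 hc2
    induction hc3 using Submodule.smul_induction_on' with
    | smul i hi c _ =>
      rw [TensorProduct.tmul_smul, ← algebraMap_smul R i (r ⊗ₜ[A] c)]
      refine Submodule.smul_mem_smul ?_ trivial
      rw [← Ideal.map_pow]
      exact Ideal.mem_map_of_mem _ hi
    | add a _ b _ ha hb => rw [TensorProduct.tmul_add]; exact Submodule.add_mem _ ha hb

theorem L_main [IsNoetherianRing A] [IsNoetherianRing R] (q : Ideal R) [q.IsPrime]
    (hq : I.map (algebraMap A R) ≤ q) (h1 : KT R q.primeCompl I.subtype)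
    (h2 : ∀ (X : Type u) [AddCommGroup X] [Module A X] (Y : Submodule A X),
      (∀ i ∈ I, ∀ x : X, i • x = 0) → KT R q.primeCompl Y.subtype) (a : Ideal A) :
    KT R q.primeCompl a.subtype := by
  intro x hx
  have key := L_mem q.primeCompl I h1 h2 a x hx
  let N := R ⊗[A] a
  let Rq := Localization.AtPrime q
  let J := I.map (algebraMap A R)
  let Jq := J.map (algebraMap R Rq)
  let ι := LocalizedModule.mkLinearMap q.primeCompl N
  have hJq : Jq ≠ ⊤ := by
    intro h
    have : Jq ≤ IsLocalRing.maximalIdeal Rq := by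
      rw [← Localization.AtPrime.map_eq_maximalIdeal]
      exact Ideal.map_mono hq
    rw [h] at this
    exact Ideal.IsPrime.ne_top' (top_le_iff.1 this)
  have hfin : Module.Finite Rq (LocalizedModule q.primeCompl N) := inferInstance
  have hbot := Ideal.iInf_pow_smul_eq_bot_of_isLocalRing (M := LocalizedModule q.primeCompl N) Jq hJq
  have h0 : ι x = 0 := by
    rw [← Submodule.mem_bot Rq, ← hbot, Submodule.mem_iInf]
    intro m
    obtain ⟨s, hs, h⟩ := key m
    have h3 : ι (s • x) ∈ Jq ^ m • (⊤ : Submodule Rq (LocalizedModule q.primeCompl N)) := by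
      generalize s • x = y at h
      induction h using Submodule.smul_induction_on' with
      | smul i hi c _ =>
        rw [map_smul, ← algebraMap_smul Rq]
        refine Submodule.smul_mem_smul ?_ trivial
        rw [← Ideal.map_pow]
        exact Ideal.mem_map_of_mem _ hi
      | add a _ b _ ha hb => rw [map_add]; exact Submodule.add_mem _ ha hb
    rw [map_smul, ← algebraMap_smul Rq] at h3
    obtain ⟨v, hv⟩ := IsLocalization.map_units Rq (⟨s, hs⟩ : q.primeCompl)
    have := Submodule.smul_mem _ (↑(v⁻¹) : Rq) h3
    rw [← mul_smul] at this
    simp only at hv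
    rw [← hv] at this
    simpa using this
  obtain ⟨t, ht⟩ := (IsLocalizedModule.eq_zero_iff q.primeCompl ι).1 h0
  exact ⟨t, t.2, ht⟩
end L

section G
variable {A : Type u} [CommRing A]

theorem free_cover (X : Type u) [AddCommGroup X] [Module A X] :
    ∃ (E K : Type u) (_ : AddCommGroup E) (_ : Module A E) (_ : AddCommGroup K) (_ : Module A K)
      (κ : K →ₗ[A] E) (π : E →ₗ[A] X), Module.Flat A E ∧ Function.Injective κ ∧
      Function.Surjective π ∧ Function.Exact κ π := by
  refine ⟨X →₀ A, LinearMap.ker (Finsupp.linearCombination A (id : X → X)), inferInstance, inferInstance,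
    inferInstance, inferInstance, Submodule.subtype _, Finsupp.linearCombination A id,
    inferInstance, Subtype.val_injective, Finsupp.linearCombination_id_surjective A X, ?_⟩
  exact LinearMap.exact_subtype_ker_map _

theorem rl_comm {M N Y X : Type u} [AddCommGroup M] [Module A M] [AddCommGroup N] [Module A N]
    [AddCommGroup Y] [Module A Y] [AddCommGroup X] [Module A X] (i : M →ₗ[A] N) (f : Y →ₗ[A] X)
    (x : M ⊗[A] Y) : i.rTensor X (f.lTensor M x) = f.lTensor N (i.rTensor Y x) := by
  induction x with
  | zero => simp
  | tmul a b => simp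
  | add a b ha hb => simp [ha, hb]

/-- flat after localization -/
def TF (S : Submonoid A) (M : Type u) [AddCommGroup M] [Module A M] : Prop :=
  ∀ (Y X : Type u) [AddCommGroup Y] [Module A Y] [AddCommGroup X] [Module A X] (f : Y →ₗ[A] X),
    Function.Injective f → KT (R := A) M S f

variable (S : Submonoid A) {M' M M'' : Type u} [AddCommGroup M'] [Module A M']
  [AddCommGroup M] [Module A M] [AddCommGroup M''] [Module A M'']

theorem TF.mono {S S' : Submonoid A} (h : S ≤ S') (hM : TF S M) : TF S' M := by
  intro Y X _ _ _ _ f hf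
  exact KT.mono _ _ h (hM Y X f hf)

theorem TF_equiv (e : M ≃ₗ[A] M') (h : TF S M) : TF S M' := by
  intro Y X _ _ _ _ f hf x hx
  have := h Y X f hf (e.symm.toLinearMap.rTensor Y x) (by
    rw [← rl_comm, hx, map_zero])
  obtain ⟨s, hs, h⟩ := this
  refine ⟨s, hs, ?_⟩
  rw [← map_smul] at h
  have h2 := congrArg (e.toLinearMap.rTensor Y) h
  rw [← LinearMap.comp_apply, ← LinearMap.rTensor_comp] at h2
  simpa using h2

theorem ext1 (i : M' →ₗ[A] M) (p : M →ₗ[A] M'') (hi : Function.Injective i)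
    (hp : Function.Surjective p) (hex : Function.Exact i p) (h : TF S M'')
    (X : Type u) [AddCommGroup X] [Module A X] (x : M' ⊗[A] X) (hx : i.rTensor X x = 0) :
    ∃ s ∈ S, s • x = 0 := by
  obtain ⟨E, K, _, _, _, _, κ, π, hE, hκ, hπ, hκπ⟩ := free_cover (A := A) X
  obtain ⟨y, rfl⟩ := LinearMap.lTensor_surjective M' hπ x
  rw [rl_comm] at hx
  obtain ⟨z, hz⟩ := (lTensor_exact M hκπ hπ _).1 hx
  have h1 : κ.lTensor M'' (p.rTensor K z) = 0 := by
    rw [← rl_comm, hz]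
    exact (rTensor_exact E hex hp _).2 ⟨y, rfl⟩
  obtain ⟨s, hs, h2⟩ := h _ _ κ hκ _ h1
  rw [← map_smul] at h2
  obtain ⟨z', hz'⟩ := (rTensor_exact K hex hp _).1 h2
  refine ⟨s, hs, ?_⟩
  have h3 : κ.lTensor M' z' = s • y := by
    apply Module.Flat.rTensor_preserves_injective_linearMap (M := E) i hi
    rw [rl_comm, hz', map_smul, map_smul, hz]
  rw [← map_smul, ← h3]
  exact (lTensor_exact M' hκπ hπ _).2 ⟨z', rfl⟩

theorem TF_ext (i : M' →ₗ[A] M) (p : M →ₗ[A] M'') (hi : Function.Injective i)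
    (hp : Function.Surjective p) (hex : Function.Exact i p) (h : TF S M'') (h' : TF S M') :
    TF S M := by
  intro Y X _ _ _ _ f hf x hx
  have h1 : f.lTensor M'' (p.rTensor Y x) = 0 := by rw [← rl_comm, hx, map_zero]
  obtain ⟨s, hs, h2⟩ := h _ _ f hf _ h1
  rw [← map_smul] at h2
  obtain ⟨z, hz⟩ := (rTensor_exact Y hex hp _).1 h2
  have h3 : i.rTensor X (f.lTensor M' z) = 0 := by
    rw [rl_comm, hz, map_smul, hx, smul_zero]
  obtain ⟨t, ht, h4⟩ := ext1 S i p hi hp hex h X _ h3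
  rw [← map_smul] at h4
  obtain ⟨r, hr, h5⟩ := h' _ _ f hf _ h4
  refine ⟨r * (t * s), S.mul_mem hr (S.mul_mem ht hs), ?_⟩
  rw [mul_smul, mul_smul, ← hz, ← map_smul, ← map_smul, h5, map_zero]

theorem union_surj (N : ℕ → Submodule A M) (hN : Monotone N) (hs : ∀ m, ∃ i, m ∈ N i)
    (Y : Type u) [AddCommGroup Y] [Module A Y] (x : M ⊗[A] Y) :
    ∃ i, ∀ j, i ≤ j → ∃ y, (N j).subtype.rTensor Y y = x := by
  induction x with
  | zero => exact ⟨0, fun j _ => ⟨0, map_zero _⟩⟩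
  | tmul a b =>
    obtain ⟨i, hi⟩ := hs a
    exact ⟨i, fun j hj => ⟨(⟨a, hN hj hi⟩ : N j) ⊗ₜ b, by simp⟩⟩
  | add a b ha hb =>
    obtain ⟨i, hi⟩ := ha
    obtain ⟨j, hj⟩ := hb
    refine ⟨max i j, fun k hk => ?_⟩
    obtain ⟨y, rfl⟩ := hi k (le_trans (le_max_left _ _) hk)
    obtain ⟨z, rfl⟩ := hj k (le_trans (le_max_right _ _) hk)
    exact ⟨y + z, map_add _ _ _⟩

theorem TF_union (N : ℕ → Submodule A M) (hN : Monotone N) (hs : ∀ m, ∃ i, m ∈ N i)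
    (h : ∀ i, TF S (N i)) : TF S M := by
  intro Y X _ _ _ _ f hf x hx
  obtain ⟨i, hi⟩ := union_surj N hN hs Y x
  obtain ⟨E, K, _, _, _, _, κ, π, hE, hκ, hπ, hκπ⟩ := free_cover (A := A) X
  obtain ⟨y, rfl⟩ := hi i le_rfl
  obtain ⟨w, hw⟩ := LinearMap.lTensor_surjective (N i) hπ (f.lTensor (N i) y)
  have h1 : π.lTensor M ((N i).subtype.rTensor E w) = 0 := by
    rw [← rl_comm, hw, rl_comm, hx]
  obtain ⟨v, hv⟩ := (lTensor_exact M hκπ hπ _).1 h1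
  obtain ⟨j0, hj0⟩ := union_surj N hN hs K v
  let j := max i j0
  obtain ⟨v', rfl⟩ := hj0 j (le_max_right _ _)
  have hij : N i ≤ N j := hN (le_max_left _ _)
  let ι : N i →ₗ[A] N j := Submodule.inclusion hij
  have hι : (N j).subtype ∘ₗ ι = (N i).subtype := rfl
  have h2 : ι.rTensor E w = κ.lTensor (N j) v' := by
    apply Module.Flat.rTensor_preserves_injective_linearMap (M := E) (N j).subtype
      Subtype.val_injective
    rw [rl_comm, hv, ← hι, LinearMap.rTensor_comp, LinearMap.comp_apply]
  have h3 : f.lTensor (N j) (ι.rTensor Y y) = 0 := by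
    rw [← rl_comm, ← hw, rl_comm, h2]
    exact (lTensor_exact (N j) hκπ hπ _).2 ⟨v', rfl⟩
  obtain ⟨s, hs, h4⟩ := h j _ _ f hf _ h3
  refine ⟨s, hs, ?_⟩
  rw [← hι, LinearMap.rTensor_comp, LinearMap.comp_apply, ← map_smul, h4, map_zero]

theorem TF_of_flat (L : Type u) [AddCommGroup L] [Module A L]
    (g : M →ₗ[A] L) [IsLocalizedModule S g] [Module.Flat A L] : TF S M := by
  intro Y X _ _ _ _ f hf
  exact KT_of_flat M S f L g hf

theorem gen_base [IsDomain A] [IsNoetherianRing A] (M : Type u) [AddCommGroup M] [Module A M]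
    [Module.Finite A M] : ∃ g : A, g ≠ 0 ∧ TF (Submonoid.powers g) M := by
  have : Module.FinitePresentation A M := Module.finitePresentation_of_finite A M
  obtain ⟨r, hr, hf, _⟩ := Module.FinitePresentation.exists_free_localizedModule_powers
    (nonZeroDivisors A) (LocalizedModule.mkLinearMap (nonZeroDivisors A) M) (FractionRing A)
  refine ⟨r, nonZeroDivisors.ne_zero hr, ?_⟩
  have : Module.Flat A (Localization (.powers r)) := IsLocalization.flat _ (Submonoid.powers r)
  have : Module.Flat A (LocalizedModule.Away r M) := Module.Flat.trans A (Localization (.powers r)) _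
  exact TF_of_flat _ (LocalizedModule.Away r M) (LocalizedModule.mkLinearMap (.powers r) M)

end G

section H
variable {A : Type u} [CommRing A]

theorem TF_dvd {M : Type u} [AddCommGroup M] [Module A M] {g g' : A} (hg : g ∣ g')
    (h : TF (Submonoid.powers g) M) : TF (Submonoid.powers g') M := by
  intro Y X _ _ _ _ f hf x hx
  obtain ⟨s, ⟨n, rfl⟩, h'⟩ := h Y X f hf x hx
  obtain ⟨c, rfl⟩ := hg
  refine ⟨(g * c) ^ n, ⟨n, rfl⟩, ?_⟩
  simp only at h'
  rw [mul_pow, mul_comm, mul_smul, h', smul_zero]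

/-- generic flatness for `B` -/
def Gen (A B : Type u) [CommRing A] [CommRing B] [Algebra A B] : Prop :=
  ∀ (M : Type u) [AddCommGroup M] [Module A M] [Module B M] [IsScalarTower A B M]
    [Module.Finite B M], ∃ g : A, g ≠ 0 ∧ TF (Submonoid.powers g) M

/-- filtration -/
def filN {B M : Type u} [CommRing B] [AddCommGroup M] [Module B M] (t : M →ₗ[B] M)
    (N : Submodule B M) : ℕ → Submodule B M
  | 0 => N
  | i + 1 => filN t N i ⊔ N.map (t ^ (i + 1))

theorem filN_t {B M : Type u} [CommRing B] [AddCommGroup M] [Module B M] (t : M →ₗ[B] M)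
    (N : Submodule B M) (i : ℕ) : (filN t N i).map t ≤ filN t N (i + 1) := by
  induction i with
  | zero =>
    simp only [filN, zero_add, pow_one]; exact le_sup_right
  | succ i ih =>
    rw [filN, Submodule.map_sup, filN]
    apply sup_le_sup ih
    rw [← Submodule.map_comp, pow_succ' t (i + 1)]
    rfl

theorem gen_step {B M : Type u} [CommRing B] [Algebra A B] [IsNoetherianRing B] [IsDomain A]
    (hB : Gen A B)
    [AddCommGroup M] [Module A M] [Module B M] [IsScalarTower A B M] (t : M →ₗ[B] M)
    (N : Submodule B M) (hN : N.FG) (hs : ∀ m, ∃ i, m ∈ filN t N i) :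
    ∃ g : A, g ≠ 0 ∧ TF (Submonoid.powers g) M := by
  have : Module.Finite B N := Module.Finite.iff_fg.2 hN
  let φ : ∀ i, N →ₗ[B] M ⧸ filN t N i := fun i => (filN t N i).mkQ ∘ₗ (t ^ (i + 1)) ∘ₗ N.subtype
  have hφ : Monotone (fun i => LinearMap.ker (φ i)) := by
    apply monotone_nat_of_le_succ
    intro i n hn
    simp only [φ, LinearMap.mem_ker, LinearMap.comp_apply, Submodule.mkQ_apply,
      Submodule.Quotient.mk_eq_zero] at hn ⊢
    apply filN_t
    refine ⟨_, hn, ?_⟩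
    rw [pow_succ' t (i + 1)]; rfl
  obtain ⟨m, hm⟩ := monotone_stabilizes_iff_noetherian.2 (inferInstance : IsNoetherian B N)
    ⟨_, hφ⟩
  simp only [OrderHom.coe_mk] at hm
  have hg1 : ∀ i, ∃ g : A, g ≠ 0 ∧ TF (Submonoid.powers g) (N ⧸ LinearMap.ker (φ i)) :=
    fun i => hB _
  choose g hg0 hg using hg1
  obtain ⟨g', hg'0, hg'⟩ := hB N
  let G := g' * ∏ i ∈ Finset.range (m + 1), g i
  refine ⟨G, mul_ne_zero hg'0 (Finset.prod_ne_zero_iff.2 fun i _ => hg0 i), ?_⟩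
  have h1 : ∀ i ≤ m, TF (Submonoid.powers G) (N ⧸ LinearMap.ker (φ i)) := fun i hi =>
    TF_dvd (Dvd.dvd.mul_left (Finset.dvd_prod_of_mem g (by simp; omega)) _) (hg i)
  have h2 : ∀ i, TF (Submonoid.powers G) (N ⧸ LinearMap.ker (φ i)) := by
    intro i
    rcases le_total i m with h | h
    · exact h1 i h
    · have := h1 m le_rfl
      rwa [hm i h] at this
  have h3 : ∀ i, TF (Submonoid.powers G) (LinearMap.range (φ i)) := fun i =>
    TF_equiv _ ((φ i).quotKerEquivRange.restrictScalars A) (h2 i)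
  have h4 : ∀ i, TF (Submonoid.powers G) (filN t N i) := by
    intro i
    induction i with
    | zero => exact TF_dvd (dvd_mul_right _ _) hg'
    | succ i ih =>
      have hp : ∀ x : filN t N (i + 1), (filN t N i).mkQ x ∈ LinearMap.range (φ i) := by
        rintro ⟨x, hx⟩
        obtain ⟨y, hy, z, ⟨n, hn, rfl⟩, rfl⟩ := Submodule.mem_sup.1 hx
        refine ⟨⟨n, hn⟩, ?_⟩
        simp only [φ, LinearMap.comp_apply, Submodule.mkQ_apply, Submodule.subtype_apply,
          Submodule.Quotient.mk_add]
        rw [(Submodule.Quotient.mk_eq_zero _).2 hy, zero_add]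
      let p : filN t N (i + 1) →ₗ[B] LinearMap.range (φ i) :=
        ((filN t N i).mkQ ∘ₗ (filN t N (i + 1)).subtype).codRestrict _ hp
      have hle : filN t N i ≤ filN t N (i + 1) := le_sup_left
      refine TF_ext _ ((Submodule.inclusion hle).restrictScalars A) (p.restrictScalars A)
        (Submodule.inclusion_injective hle) ?_ ?_ (h3 i) ih
      · rintro ⟨_, n, rfl⟩
        refine ⟨⟨(t ^ (i + 1)) n, Submodule.mem_sup_right ⟨n, n.2, rfl⟩⟩, rfl⟩
      · intro x
        constructor
        · intro h
          have h' : (filN t N i).mkQ x = 0 := congrArg Subtype.val h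
          rw [Submodule.mkQ_apply, Submodule.Quotient.mk_eq_zero] at h'
          exact ⟨⟨x, h'⟩, rfl⟩
        · rintro ⟨y, rfl⟩
          apply Subtype.ext
          exact (Submodule.Quotient.mk_eq_zero _).2 y.2
  refine TF_union _ (fun i => (filN t N i).restrictScalars A) ?_ hs h4
  apply monotone_nat_of_le_succ
  intro i
  exact (le_sup_left : filN t N i ≤ _)

theorem gen_poly {B : Type u} [CommRing B] [Algebra A B] [IsNoetherianRing B] [IsDomain A]
    (hB : Gen A B) : Gen A (Polynomial B) := by
  intro M _ _ _ _ _
  let _ : Module B M := Module.compHom M (Polynomial.C : B →+* Polynomial B)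
  have hC : ∀ (b : B) (m : M), b • m = (Polynomial.C b : Polynomial B) • m := fun _ _ => rfl
  have : IsScalarTower A B M := ⟨fun a b m => by
    rw [hC, hC, ← smul_assoc, Polynomial.smul_C]⟩
  have : IsScalarTower B (Polynomial B) M := ⟨fun a b m => by
    rw [hC, smul_smul, Polynomial.smul_eq_C_mul]⟩
  obtain ⟨s, hs⟩ := (Module.Finite.fg_top : (⊤ : Submodule (Polynomial B) M).FG)
  let t : M →ₗ[B] M := 
    { toFun := fun m => (Polynomial.X : Polynomial B) • m
      map_add' := fun a b => smul_add _ _ _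
      map_smul' := fun b m => by
        simp only [hC, smul_smul, mul_comm, RingHom.id_apply] }
  have ht : ∀ n m, (t ^ n) m = (Polynomial.X ^ n : Polynomial B) • m := by
    intro n
    induction n with
    | zero => intro m; simp
    | succ n ih => intro m; rw [pow_succ, pow_succ, mul_smul]; exact ih _
  let N := Submodule.span B (s : Set M)
  have hmono : Monotone (filN t N) := monotone_nat_of_le_succ fun i => le_sup_left
  have hin : ∀ i, N.map (t ^ i) ≤ filN t N i := by
    intro i
    cases i with
    | zero => rintro _ ⟨n, hn, rfl⟩; exact hn
    | succ i => exact le_sup_right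
  refine gen_step hB t N ⟨s, rfl⟩ ?_
  have key : ∀ (p : Polynomial B) (n : M), n ∈ N → ∃ i, p • n ∈ filN t N i := by
    intro p n hn
    induction p using Polynomial.induction_on' with
    | add p q hp hq =>
      obtain ⟨i, hi⟩ := hp
      obtain ⟨j, hj⟩ := hq
      refine ⟨max i j, ?_⟩
      rw [add_smul]
      exact add_mem (hmono (le_max_left _ _) hi) (hmono (le_max_right _ _) hj)
    | monomial k b =>
      refine ⟨k, ?_⟩
      rw [← Polynomial.C_mul_X_pow_eq_monomial, mul_smul, ← hC]
      apply Submodule.smul_mem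
      rw [← ht]
      exact hin k ⟨n, hn, rfl⟩
  intro m
  have hm : m ∈ Submodule.span (Polynomial B) (s : Set M) := by rw [hs]; trivial
  induction hm using Submodule.span_induction with
  | mem x hx => exact ⟨0, Submodule.subset_span hx⟩
  | zero => exact ⟨0, zero_mem _⟩
  | add x y _ _ hx hy =>
    obtain ⟨i, hi⟩ := hx
    obtain ⟨j, hj⟩ := hy
    exact ⟨max i j, add_mem (hmono (le_max_left _ _) hi) (hmono (le_max_right _ _) hj)⟩
  | smul p x _ hx =>
    obtain ⟨i, hi⟩ := hx
    clear hs
    rename_i hxs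
    clear hxs
    induction i generalizing x with
    | zero => exact key p x hi
    | succ i ih =>
      obtain ⟨y, hy, z, ⟨n, hn, rfl⟩, rfl⟩ := Submodule.mem_sup.1 hi
      obtain ⟨i', hi'⟩ := ih y hy
      obtain ⟨j, hj⟩ := key (p * Polynomial.X ^ (i + 1)) n hn
      refine ⟨max i' j, ?_⟩
      rw [smul_add, ht, smul_smul]
      exact add_mem (hmono (le_max_left _ _) hi') (hmono (le_max_right _ _) hj)

theorem gen_surj {B C : Type u} [CommRing B] [CommRing C] [Algebra A B] [Algebra A C]
    (φ : B →ₐ[A] C) (hφ : Function.Surjective φ) (hB : Gen A B) : Gen A C := by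
  intro M _ _ _ _ _
  let _ : Module B M := Module.compHom M φ.toRingHom
  have hC : ∀ (b : B) (m : M), b • m = φ b • m := fun _ _ => rfl
  have : IsScalarTower A B M := ⟨fun a b m => by
    rw [hC, hC, ← smul_assoc, map_smul]⟩
  have : Module.Finite B M := by
    obtain ⟨s, hs⟩ := (Module.Finite.fg_top : (⊤ : Submodule C M).FG)
    refine ⟨⟨s, ?_⟩⟩
    rw [eq_top_iff]
    intro m _
    have hm : m ∈ Submodule.span C (s : Set M) := by rw [hs]; trivial
    clear hs
    induction hm using Submodule.span_induction with
    | mem x hx => exact Submodule.subset_span hx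
    | zero => exact zero_mem _
    | add x y _ _ hx hy => exact add_mem (hx trivial) (hy trivial)
    | smul p x _ hx =>
      obtain ⟨b, rfl⟩ := hφ p
      rw [← hC]
      exact Submodule.smul_mem _ _ (hx trivial)
  exact hB M

theorem gen_mv [IsDomain A] [IsNoetherianRing A] (n : ℕ) : Gen A (MvPolynomial (Fin n) A) := by
  induction n with
  | zero =>
    have : Gen A A := by
      intro M _ m1 m2 h hfin
      have e : m1 = m2 := by
        refine Module.ext' _ _ fun a m => ?_
        have := h.smul_assoc a 1 m
        rw [smul_eq_mul, mul_one] at this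
        rw [this]
        congr 1
        exact (m2.one_smul m).symm
      subst e
      exact gen_base M
    exact gen_surj (MvPolynomial.isEmptyAlgEquiv A (Fin 0)).symm.toAlgHom
      (MvPolynomial.isEmptyAlgEquiv A (Fin 0)).symm.surjective this
  | succ n ih =>
    exact gen_surj (MvPolynomial.finSuccEquiv A n).symm.toAlgHom
      (MvPolynomial.finSuccEquiv A n).symm.surjective (gen_poly ih)

theorem gen_main [IsDomain A] [IsNoetherianRing A] (B : Type u) [CommRing B] [Algebra A B]
    [Algebra.FiniteType A B] : ∃ g : A, g ≠ 0 ∧ TF (Submonoid.powers g) B := by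
  obtain ⟨n, f, hf⟩ := Algebra.FiniteType.iff_quotient_mvPolynomial''.1
    (inferInstance : Algebra.FiniteType A B)
  exact gen_surj f hf (gen_mv n) B
end H

section B

/-- naturality -/
theorem cbc_nat {A A' R R' : Type u} [CommRing A] [CommRing A'] [CommRing R] [CommRing R']
    [Algebra A A'] [Algebra A R] [Algebra A R'] [Algebra A' R'] [Algebra R R']
    [IsScalarTower A A' R'] [IsScalarTower A R R'] [Algebra.IsPushout A R A' R']
    {Y X : Type u} [AddCommGroup Y] [AddCommGroup X] [Module A Y] [Module A X] [Module A' Y]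
    [Module A' X] [IsScalarTower A A' Y] [IsScalarTower A A' X] (f : Y →ₗ[A'] X)
    (x : R ⊗[A] Y) : 
    f.lTensor R' ((Algebra.IsPushout.cancelBaseChange A R A' R' Y).symm x) =
    (Algebra.IsPushout.cancelBaseChange A R A' R' X).symm ((f.restrictScalars A).lTensor R x) := by
  induction x with
  | zero => simp
  | tmul a b => simp
  | add a b ha hb => simp only [map_add, ha, hb]

theorem KT_bc {A A' R R' : Type u} [CommRing A] [CommRing A'] [CommRing R] [CommRing R']
    [Algebra A A'] [Algebra A R] [Algebra A R'] [Algebra A' R'] [Algebra R R']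
    [IsScalarTower A A' R'] [IsScalarTower A R R'] [Algebra.IsPushout A R A' R']
    {Y X : Type u} [AddCommGroup Y] [AddCommGroup X] [Module A Y] [Module A X] [Module A' Y]
    [Module A' X] [IsScalarTower A A' Y] [IsScalarTower A A' X] (f : Y →ₗ[A'] X)
    (S : Submonoid R) (S' : Submonoid R') (hS : ∀ s ∈ S, algebraMap R R' s ∈ S')
    (h : KT R S (f.restrictScalars A)) : KT R' S' f := by
  intro x hx
  obtain ⟨y, rfl⟩ := (Algebra.IsPushout.cancelBaseChange A R A' R' Y).symm.surjective x
  rw [cbc_nat] at hx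
  have hx' := (LinearEquiv.map_eq_zero_iff _).1 hx
  obtain ⟨s, hs, h'⟩ := h y hx'
  refine ⟨_, hS s hs, ?_⟩
  rw [algebraMap_smul, ← map_smul, h', map_zero]

theorem GF {A R : Type u} [CommRing A] [CommRing R] [Algebra A R] [IsNoetherianRing A]
    [Algebra.FiniteType A R] (P : Ideal A) [P.IsPrime] :
    ∃ g : A, g ∉ P ∧ ∀ (Y X : Type u) [AddCommGroup Y] [AddCommGroup X] [Module A Y] [Module A X]
      (f : Y →ₗ[A] X), Function.Injective f → (∀ i ∈ P, ∀ x : X, i • x = 0) →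
      KT R (Submonoid.powers (algebraMap A R g)) f := by
  obtain ⟨g, hg0, hg⟩ := gen_main (A := A ⧸ P) ((A ⧸ P) ⊗[A] R)
  obtain ⟨g, rfl⟩ := Ideal.Quotient.mk_surjective g
  refine ⟨g, fun h => hg0 (Ideal.Quotient.eq_zero_iff_mem.2 h), ?_⟩
  intro Y X _ _ _ _ f hf hX
  have hY : ∀ i ∈ P, ∀ x : Y, i • x = 0 := fun i hi x => hf (by rw [map_smul, hX i hi, map_zero])
  have tX : Module.IsTorsionBySet A X P := fun x i => hX i i.2 x
  have tY : Module.IsTorsionBySet A Y P := fun x i => hY i i.2 x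
  let _ := tX.module
  let _ := tY.module
  have : IsScalarTower A (A ⧸ P) X := tX.isScalarTower
  have : IsScalarTower A (A ⧸ P) Y := tY.isScalarTower
  let f' : Y →ₗ[A ⧸ P] X := f.extendScalarsOfSurjective Ideal.Quotient.mk_surjective
  let _ : Algebra R ((A ⧸ P) ⊗[A] R) := Algebra.TensorProduct.rightAlgebra
  have : Algebra.IsPushout A R (A ⧸ P) ((A ⧸ P) ⊗[A] R) := TensorProduct.isPushout'
  intro x hx
  let e := Algebra.IsPushout.cancelBaseChange A R (A ⧸ P) ((A ⧸ P) ⊗[A] R) Y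
  have h1 : f'.lTensor ((A ⧸ P) ⊗[A] R) (e.symm x) = 0 := by
    rw [cbc_nat]
    exact (LinearEquiv.map_eq_zero_iff _).2 hx
  obtain ⟨_, ⟨n, rfl⟩, h2⟩ := hg Y X f' hf _ h1
  refine ⟨_, ⟨n, rfl⟩, ?_⟩
  simp only at h2 ⊢
  rw [← map_pow] at h2 ⊢
  apply e.symm.injective
  rw [map_zero, ← h2, map_smul, algebraMap_smul]
  exact (algebraMap_smul (A ⧸ P) (g ^ n) (e.symm x)).symm

theorem KT_of_primes {A R : Type u} [CommRing A] [CommRing R] [Algebra A R] (s : R)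
    {Y X : Type u} [AddCommGroup Y] [AddCommGroup X] [Module A Y] [Module A X] (f : Y →ₗ[A] X)
    (h : ∀ (q : Ideal R) [q.IsPrime], s ∉ q → KT R q.primeCompl f) :
    KT R (Submonoid.powers s) f := by
  intro x hx
  let a : Ideal R := LinearMap.ker (LinearMap.toSpanSingleton R (R ⊗[A] Y) x)
  have ha : ∀ r, r ∈ a ↔ r • x = 0 := fun r => Iff.rfl
  have : s ∈ a.radical := by
    rw [Ideal.radical_eq_sInf, Ideal.mem_sInf]
    rintro q ⟨hq, hqp⟩
    by_contra hs
    have := hqp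
    obtain ⟨t, ht, h'⟩ := h q hs x hx
    exact ht (hq ((ha t).2 h'))
  obtain ⟨n, hn⟩ := this
  exact ⟨_, ⟨n, rfl⟩, hn⟩

theorem ann_fg {R M : Type u} [CommRing R] [AddCommGroup M] [Module R M] (K : Submodule R M)
    (hK : K.FG) (S : Submonoid R) (h : ∀ x ∈ K, ∃ s ∈ S, s • x = 0) :
    ∃ s ∈ S, ∀ x ∈ K, s • x = 0 := by
  induction K, hK using Submodule.fg_induction with
  | singleton x =>
    obtain ⟨s, hs, h'⟩ := h x (Submodule.mem_span_singleton_self x)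
    refine ⟨s, hs, fun y hy => ?_⟩
    obtain ⟨r, rfl⟩ := Submodule.mem_span_singleton.1 hy
    rw [smul_comm, h', smul_zero]
  | sup M₁ M₂ _ _ h1 h2 =>
    obtain ⟨s, hs, hs'⟩ := h1 fun x hx => h x (Submodule.mem_sup_left hx)
    obtain ⟨t, ht, ht'⟩ := h2 fun x hx => h x (Submodule.mem_sup_right hx)
    refine ⟨s * t, S.mul_mem hs ht, fun x hx => ?_⟩
    obtain ⟨y, hy, z, hz, rfl⟩ := Submodule.mem_sup.1 hx
    rw [smul_add, mul_smul s t z, ht' z hz, mul_comm, mul_smul, hs' y hy, smul_zero, smul_zero,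
      add_zero]

/-- flat at q -/
def FlatAt (A : Type u) {R : Type u} [CommRing A] [CommRing R] [Algebra A R] (q : Ideal R) : Prop :=
  ∃ _ : q.IsPrime, ∀ a : Ideal A, KT R q.primeCompl a.subtype

theorem FlatAt.gen {A R : Type u} [CommRing A] [CommRing R] [Algebra A R] {q q' : Ideal R}
    [hq' : q'.IsPrime] (h : q' ≤ q) (hq : FlatAt A q) : FlatAt A q' := by
  obtain ⟨h1, h2⟩ := hq
  have hle : q.primeCompl ≤ q'.primeCompl := fun s hs hs' => hs (h hs')
  exact ⟨hq', fun a => (h2 a).mono _ _ hle⟩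

theorem N_loc {A R : Type u} [CommRing A] [CommRing R] [Algebra A R] [IsNoetherianRing A]
    [Algebra.FiniteType A R] (q : Ideal R) (hq : FlatAt A q) :
    ∃ s ∉ q, ∀ q' : Ideal R, q'.IsPrime → q ≤ q' → s ∉ q' → FlatAt A q' := by
  have : IsNoetherianRing R := Algebra.FiniteType.isNoetherianRing A R
  obtain ⟨hqp, hq⟩ := hq
  let P := q.comap (algebraMap A R)
  obtain ⟨g, hg, hg'⟩ := GF (R := R) P
  let K : Submodule R (R ⊗[A] P) := LinearMap.ker (AlgebraTensorModule.lTensor R R P.subtype)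
  obtain ⟨s, hs, hs'⟩ := ann_fg K (IsNoetherian.noetherian K) q.primeCompl (fun x hx => hq P x hx)
  refine ⟨s * algebraMap A R g, fun h => (hqp.mem_or_mem h).elim hs hg, ?_⟩
  intro q' hq' hle h
  refine ⟨hq', L_main P q' ?_ ?_ ?_⟩
  · exact (Ideal.map_comap_le).trans hle
  · intro x hx
    exact ⟨s, fun hh => h (Ideal.mul_mem_right _ _ hh), hs' x hx⟩
  · intro X _ _ Y hX
    refine KT.mono _ _ ?_ (hg' Y X Y.subtype Subtype.val_injective hX)
    rw [Submonoid.powers_le]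
    exact fun hh => h (Ideal.mul_mem_left _ _ hh)

theorem N_main {A R : Type u} [CommRing A] [CommRing R] [Algebra A R] [IsNoetherianRing A]
    [Algebra.FiniteType A R] (q : Ideal R) (hq : FlatAt A q) :
    ∃ s ∉ q, ∀ q' : Ideal R, q'.IsPrime → s ∉ q' → FlatAt A q' := by
  classical
  have : IsNoetherianRing R := Algebra.FiniteType.isNoetherianRing A R
  let Z : Set (Ideal R) := {p | p.IsPrime ∧ ¬ FlatAt A p}
  let a : Ideal R := sInf Z
  have ha : ∀ p ∈ Z, a ≤ p := fun p hp => sInf_le hp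
  have hfin : a.minimalPrimes.Finite := Ideal.finite_minimalPrimes_of_isNoetherianRing R a
  have hmin : ∀ p ∈ a.minimalPrimes, ¬ FlatAt A p := by
    intro p hp hf
    obtain ⟨s, hs, h⟩ := N_loc p hf
    have hpp : p.IsPrime := hp.1.1
    have : ¬ (hfin.toFinset.erase p).inf id ≤ p := by
      intro hle
      obtain ⟨p', hp', hle'⟩ := (Ideal.IsPrime.inf_le' hpp).1 hle
      rw [Finset.mem_erase, Set.Finite.mem_toFinset] at hp'
      exact hp'.1 (le_antisymm hle' (hp.2 hp'.2.1 hle'))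
    obtain ⟨t, ht, htp⟩ := SetLike.not_le_iff_exists.1 this
    have hst : s * t ∈ a := by
      rw [Ideal.mem_sInf]
      intro p' hp'
      have := hp'.1
      obtain ⟨p'', hp'', hle⟩ := Ideal.exists_minimalPrimes_le (ha p' hp')
      by_cases he : p'' = p
      · subst he
        by_contra hc
        exact hp'.2 (h p' hp'.1 hle fun hh => hc (Ideal.mul_mem_right _ _ hh))
      · apply Ideal.mul_mem_left
        apply hle
        have : (hfin.toFinset.erase p).inf id ≤ p'' :=
          Finset.inf_le (f := id) (by
            rw [Finset.mem_erase, Set.Finite.mem_toFinset]; exact ⟨he, hp''⟩)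
        exact this ht
    exact (hpp.mem_or_mem (hp.1.2 hst)).elim hs htp
  have hqp : q.IsPrime := hq.1
  have : ¬ a ≤ q := by
    intro h
    obtain ⟨p, hp, hle⟩ := Ideal.exists_minimalPrimes_le h
    have : p.IsPrime := hp.1.1
    exact hmin p hp (hq.gen hle)
  obtain ⟨s, hs, hsq⟩ := SetLike.not_le_iff_exists.1 this
  refine ⟨s, hsq, fun q' hq' h => ?_⟩
  by_contra hc
  exact h (ha q' ⟨hq', hc⟩ hs)

end B

section K
variable {A R : Type u} [CommRing A] [CommRing R] [Algebra A R]

theorem K_aux (P : Ideal A) {W N C : Type u} [AddCommGroup W] [Module A W] [AddCommGroup N]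
    [Module A N] (b : W →ₗ[A] P →ₗ[A] N) [AddCommGroup C] [Module A C] [Module.Flat A C]
    (π : C →ₗ[A] W) (μ : C ⊗[A] P →ₗ[A] C) (hμ : ∀ c p, μ (c ⊗ₜ p) = (p : A) • c)
    (y : R ⊗[A] (C ⊗[A] P)) (hy : μ.lTensor R y = 0) :
    (TensorProduct.lift (b ∘ₗ π)).lTensor R y ∈ AddSubgroup.closure
      {z | ∃ w k, P.subtype.lTensor R k = 0 ∧ z = (b w).lTensor R k} := by
  let ψ := P.subtype.lTensor R
  let e1 : R ⊗[A] (C ⊗[A] P) ≃ₗ[A] C ⊗[A] (R ⊗[A] P) := TensorProduct.leftComm A R C P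
  let e2 : C ⊗[A] (R ⊗[A] A) ≃ₗ[A] R ⊗[A] C :=
    ((TensorProduct.rid A R).lTensor C).trans (TensorProduct.comm A C R)
  have hc : ∀ y, e2 (ψ.lTensor C (e1 y)) = μ.lTensor R y := by
    intro y
    have : (e2.toLinearMap ∘ₗ ψ.lTensor C ∘ₗ e1.toLinearMap) = μ.lTensor R := by
      ext r c p
      simp [e1, e2, ψ, hμ, TensorProduct.smul_tmul]
    exact LinearMap.congr_fun this y
  have h0 : ψ.lTensor C (e1 y) = 0 := by
    apply e2.injective
    rw [hc, hy, map_zero]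
  have hex0 : Function.Exact (LinearMap.ker ψ).subtype ψ := LinearMap.exact_subtype_ker_map _
  have hex := Module.Flat.lTensor_exact (R := A) C (N := LinearMap.ker ψ) (N' := R ⊗[A] P)
    (N'' := R ⊗[A] A) (f := (LinearMap.ker ψ).subtype) (g := ψ) hex0
  obtain ⟨k, hk⟩ := (hex _).1 h0
  have hy' : y = e1.symm ((LinearMap.ker ψ).subtype.lTensor C k) := by
    rw [hk, LinearEquiv.symm_apply_apply]
  rw [hy']
  clear hy' hk h0 hy y
  induction k with
  | zero => simp
  | add x y hx hy => simp only [map_add]; exact add_mem hx hy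
  | tmul c k0 =>
    apply AddSubgroup.subset_closure
    refine ⟨π c, k0, k0.2, ?_⟩
    rw [LinearMap.lTensor_tmul, Submodule.subtype_apply]
    generalize (k0 : R ⊗[A] P) = k1
    induction k1 with
    | zero => simp
    | add x y hx hy => simp only [map_add, TensorProduct.tmul_add, hx, hy]
    | tmul r p => simp [e1]

theorem K_main (P : Ideal A) (S : Submonoid R)
    (H : ∀ (Y X : Type u) [AddCommGroup Y] [AddCommGroup X] [Module A Y] [Module A X]
      (f : Y →ₗ[A] X), Function.Injective f → (∀ i ∈ P, ∀ x : X, i • x = 0) → KT R S f)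
    {W N : Type u} [AddCommGroup W] [Module A W] [AddCommGroup N]
    [Module A N] (b : W →ₗ[A] P →ₗ[A] N) (j : N →ₗ[A] W) (hj : Function.Injective j)
    (hb : ∀ w p, j (b w p) = (p : A) • w) (hN : ∀ n, j n ∈ P • (⊤ : Submodule A W))
    (x : R ⊗[A] N) (hx : j.lTensor R x = 0) :
    ∃ s ∈ S, s • x ∈ AddSubgroup.closure
      {z | ∃ w k, P.subtype.lTensor R k = 0 ∧ z = (b w).lTensor R k} := by
  obtain ⟨C, Q, _, _, _, _, κ, π, hC, hκ, hπ, hκπ⟩ := free_cover (A := A) W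
  let μ : C ⊗[A] P →ₗ[A] C := (TensorProduct.rid A C).toLinearMap ∘ₗ P.subtype.lTensor C
  have hμ : ∀ c p, μ (c ⊗ₜ p) = (p : A) • c := fun c p => by simp [μ]
  have hμi : Function.Injective μ := (TensorProduct.rid A C).injective.comp
    (Module.Flat.lTensor_preserves_injective_linearMap _ Subtype.val_injective)
  let δ : C ⊗[A] P →ₗ[A] N := TensorProduct.lift (b ∘ₗ π)
  have hδ : ∀ d, j (δ d) = π (μ d) := by
    intro d
    have : j ∘ₗ δ = π ∘ₗ μ := by
      ext c p
      simp [δ, hb, hμ]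
    exact LinearMap.congr_fun this d
  have hδs : Function.Surjective δ := by
    intro n
    have : ∀ w ∈ P • (⊤ : Submodule A W), ∃ d, π (μ d) = w := by
      intro w hw
      induction hw using Submodule.smul_induction_on' with
      | smul p hp w _ =>
        obtain ⟨c, rfl⟩ := hπ w
        exact ⟨c ⊗ₜ ⟨p, hp⟩, by rw [hμ, map_smul]⟩
      | add x _ y _ hx hy =>
        obtain ⟨d, rfl⟩ := hx
        obtain ⟨d', rfl⟩ := hy
        exact ⟨d + d', by simp⟩
    obtain ⟨d, hd⟩ := this _ (hN n)
    exact ⟨d, hj (by rw [hδ, hd])⟩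
  obtain ⟨y, rfl⟩ := LinearMap.lTensor_surjective R hδs x
  have h1 : π.lTensor R (μ.lTensor R y) = 0 := by
    rw [← LinearMap.comp_apply, ← LinearMap.lTensor_comp, ← hx, ← LinearMap.comp_apply,
      ← LinearMap.lTensor_comp]
    congr 2
    refine LinearMap.ext fun d => ?_
    exact (hδ d).symm
  obtain ⟨z, hz⟩ := (lTensor_exact R hκπ hπ _).1 h1
  let D := LinearMap.range μ
  let Q1 := LinearMap.ker (D.mkQ ∘ₗ κ)
  let φ : Q ⧸ Q1 →ₗ[A] C ⧸ D := Q1.liftQ (D.mkQ ∘ₗ κ) le_rfl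
  have hφ : Function.Injective φ := by
    rw [← LinearMap.ker_eq_bot]
    exact Submodule.ker_liftQ_eq_bot _ _ _ le_rfl
  have hφ' : φ ∘ₗ Q1.mkQ = D.mkQ ∘ₗ κ := Submodule.liftQ_mkQ _ _ _
  have h2 : φ.lTensor R (Q1.mkQ.lTensor R z) = 0 := by
    rw [← LinearMap.comp_apply, ← LinearMap.lTensor_comp, hφ', LinearMap.lTensor_comp,
      LinearMap.comp_apply, hz, ← LinearMap.comp_apply, ← LinearMap.lTensor_comp]
    have : D.mkQ ∘ₗ μ = 0 := by
      refine LinearMap.ext fun d => ?_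
      exact (Submodule.Quotient.mk_eq_zero _).2 ⟨d, rfl⟩
    rw [this]; simp
  obtain ⟨s, hs, h3⟩ := H _ _ φ hφ (by
    intro i hi x
    obtain ⟨c, rfl⟩ := D.mkQ_surjective x
    rw [← map_smul]
    exact (Submodule.Quotient.mk_eq_zero _).2 ⟨c ⊗ₜ ⟨i, hi⟩, by rw [hμ]⟩) _ h2
  rw [← lTensor_smul_R] at h3
  have hex : Function.Exact Q1.subtype Q1.mkQ := by
    intro q
    simp
  obtain ⟨z', hz'⟩ := (lTensor_exact R hex Q1.mkQ_surjective _).1 h3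
  have hmem : ∀ q : Q1, κ q ∈ D := fun q => by
    have := q.2
    exact (Submodule.Quotient.mk_eq_zero _).1 this
  let l : Q1 →ₗ[A] C ⊗[A] P := (LinearEquiv.ofInjective μ hμi).symm.toLinearMap ∘ₗ
    (κ ∘ₗ Q1.subtype).codRestrict D hmem
  have hl : μ ∘ₗ l = κ ∘ₗ Q1.subtype := by
    ext1 q
    have := LinearEquiv.apply_symm_apply (LinearEquiv.ofInjective μ hμi)
      ((κ ∘ₗ Q1.subtype).codRestrict D hmem q)
    exact congrArg Subtype.val this
  have hδl : δ ∘ₗ l = 0 := by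
    ext1 q
    apply hj
    rw [LinearMap.comp_apply, hδ]
    have := LinearMap.congr_fun hl q
    rw [LinearMap.comp_apply] at this
    rw [this]
    simpa using hκπ.apply_apply_eq_zero (q : Q)
  refine ⟨s, hs, ?_⟩
  have h4 := K_aux (R := R) P b π μ hμ (s • y - l.lTensor R z') (by
    rw [map_sub, lTensor_smul_R, ← hz, ← LinearMap.comp_apply, ← LinearMap.lTensor_comp, hl,
      LinearMap.lTensor_comp, LinearMap.comp_apply, hz', lTensor_smul_R, sub_self])
  have h5 : δ.lTensor R (s • y - l.lTensor R z') = s • δ.lTensor R y := by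
    rw [map_sub, lTensor_smul_R, ← LinearMap.comp_apply, ← LinearMap.lTensor_comp, hδl]
    simp
  rw [← h5]
  exact h4

/-- vanishing in a directed union is already visible at a finite stage -/
theorem colim_zero {ι : Type u} [Preorder ι] [IsDirected ι (· ≤ ·)] [Nonempty ι]
    (N : ι → Type u) [∀ i, AddCommGroup (N i)] [∀ i, Module A (N i)]
    {M : Type u} [AddCommGroup M] [Module A M] (c : ∀ i, N i →ₗ[A] M)
    (t : ∀ i j, i ≤ j → N i →ₗ[A] N j) (hct : ∀ i j h, c j ∘ₗ t i j h = c i)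
    (hinj : ∀ i, Function.Injective (c i)) (hs : ∀ m, ∃ i n, c i n = m) (i : ι)
    (x : R ⊗[A] N i) (hx : (c i).lTensor R x = 0) :
    ∃ j, ∃ h : i ≤ j, (t i j h).lTensor R x = 0 := by
  obtain ⟨E, K, _, _, _, _, κ, π, hE, hκ, hπ, hκπ⟩ := free_cover (A := A) R
  obtain ⟨w, rfl⟩ := LinearMap.rTensor_surjective (N i) hπ x
  rw [← rl_comm] at hx
  obtain ⟨v, hv⟩ := (rTensor_exact M hκπ hπ _).1 hx
  have hsurj : ∀ v : K ⊗[A] M, ∃ i, ∀ j, i ≤ j → ∃ y, (c j).lTensor K y = v := by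
    intro v
    induction v with
    | zero => exact ⟨i, fun j _ => ⟨0, map_zero _⟩⟩
    | tmul a m =>
      obtain ⟨i, n, rfl⟩ := hs m
      refine ⟨i, fun j hj => ⟨a ⊗ₜ t i j hj n, ?_⟩⟩
      rw [LinearMap.lTensor_tmul, ← hct i j hj]; rfl
    | add a b ha hb =>
      obtain ⟨i, hi⟩ := ha
      obtain ⟨j, hj⟩ := hb
      obtain ⟨k, hik, hjk⟩ := exists_ge_ge i j
      refine ⟨k, fun l hl => ?_⟩
      obtain ⟨y, rfl⟩ := hi l (hik.trans hl)
      obtain ⟨z, rfl⟩ := hj l (hjk.trans hl)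
      exact ⟨y + z, map_add _ _ _⟩
  obtain ⟨j0, hj0⟩ := hsurj v
  obtain ⟨j, hij, hj⟩ := exists_ge_ge i j0
  obtain ⟨v', rfl⟩ := hj0 j hj
  refine ⟨j, hij, ?_⟩
  have h2 : (t i j hij).lTensor E w = κ.rTensor (N j) v' := by
    apply Module.Flat.lTensor_preserves_injective_linearMap (M := E) (c j) (hinj j)
    rw [← rl_comm, hv, ← hct i j hij, LinearMap.lTensor_comp, LinearMap.comp_apply]
  rw [← rl_comm, h2]
  exact (rTensor_exact (N j) hκπ hπ _).2 ⟨v', rfl⟩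

end K

section D
attribute [local instance] Algebra.TensorProduct.rightAlgebra

/-- multiplication -/
noncomputable def bb {A : Type u} [CommRing A] (P : Ideal A) (A' : Type u) [CommRing A']
    [Algebra A A'] : A' →ₗ[A] P →ₗ[A] P.map (algebraMap A A') :=
  LinearMap.mk₂ A (fun w p => ⟨algebraMap A A' p * w,
      Ideal.mul_mem_right _ _ (Ideal.mem_map_of_mem _ p.2)⟩)
    (fun w w' p => by ext; simp [mul_add])
    (fun c w p => by ext; simp [Algebra.smul_def]; ring)
    (fun w p p' => by ext; simp [add_mul])
    (fun c w p => by ext; simp [Algebra.smul_def]; ring)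

variable {A R : Type u} [CommRing A] [CommRing R] [Algebra A R] (P : Ideal A)

@[simp] theorem bb_apply (A' : Type u) [CommRing A'] [Algebra A A'] (w : A') (p : P) :
    (bb P A' w p : A') = algebraMap A A' p * w := rfl

/-- action on `k` -/
noncomputable def Th (A' : Type u) [CommRing A'] [Algebra A A'] (k : R ⊗[A] P) :
    A' ⊗[A] R →ₗ[A] R ⊗[A] P.map (algebraMap A A') :=
  TensorProduct.lift (LinearMap.mk₂ A (fun w r => (bb P A' w).lTensor R (r • k))
    (fun w w' r => by rw [map_add, LinearMap.lTensor_add]; rfl)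
    (fun c w r => by rw [LinearMap.map_smul (bb P A') c w, LinearMap.lTensor_smul]; rfl)
    (fun w r r' => by rw [add_smul, map_add])
    (fun c w r => by rw [smul_assoc, map_smul]))

@[simp] theorem Th_tmul (A' : Type u) [CommRing A'] [Algebra A A'] (k : R ⊗[A] P) (w : A') (r : R) :
    Th P A' k (w ⊗ₜ r) = (bb P A' w).lTensor R (r • k) := rfl

/-- image of `k` -/
noncomputable def th (A' : Type u) [CommRing A'] [Algebra A A'] (k : R ⊗[A] P) :
    (A' ⊗[A] R) ⊗[A'] P.map (algebraMap A A') :=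
  (Algebra.IsPushout.cancelBaseChange A R A' (A' ⊗[A] R) (P.map (algebraMap A A'))).symm
    ((bb P A' 1).lTensor R k)

theorem cbc_bb (A' : Type u) [CommRing A'] [Algebra A A'] (k : R ⊗[A] P) (w : A') :
    (Algebra.IsPushout.cancelBaseChange A R A' (A' ⊗[A] R) (P.map (algebraMap A A'))).symm
    ((bb P A' w).lTensor R k) = algebraMap A' (A' ⊗[A] R) w • th P A' k := by
  unfold th
  induction k with
  | zero => rw [LinearMap.map_zero, LinearMap.map_zero, LinearEquiv.map_zero, smul_zero]
  | add x y hx hy => simp only [map_add, smul_add, hx, hy]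
  | tmul r p =>
    rw [algebraMap_smul]
    simp only [LinearMap.lTensor_tmul, Algebra.IsPushout.cancelBaseChange_symm_tmul]
    rw [← TensorProduct.tmul_smul]
    congr 1
    ext
    simp [mul_comm]

theorem th_smul (A' : Type u) [CommRing A'] [Algebra A A'] (k : R ⊗[A] P) (r : R) :
    th P A' (r • k) = algebraMap R (A' ⊗[A] R) r • th P A' k := by
  unfold th
  rw [lTensor_smul_R, map_smul, algebraMap_smul]

theorem Th_eq (A' : Type u) [CommRing A'] [Algebra A A'] (k : R ⊗[A] P) (s : A' ⊗[A] R) :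
    (Algebra.IsPushout.cancelBaseChange A R A' (A' ⊗[A] R) (P.map (algebraMap A A'))).symm
      (Th P A' k s) = s • th P A' k := by
  induction s with
  | zero => rw [LinearMap.map_zero, LinearEquiv.map_zero, zero_smul]
  | add x y hx hy => simp only [map_add, add_smul, hx, hy]
  | tmul w r =>
    rw [Th_tmul, cbc_bb, th_smul, smul_smul]
    congr 1
    simp [Algebra.TensorProduct.right_algebraMap_apply]

theorem Th_nat (A' A'' : Type u) [CommRing A'] [Algebra A A'] [CommRing A''] [Algebra A A'']
    (φ : A' →ₐ[A] A'')
    (t : P.map (algebraMap A A') →ₗ[A] P.map (algebraMap A A'')) (ht : ∀ x, (t x : A'') = φ x)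
    (k : R ⊗[A] P) (s : A' ⊗[A] R) :
    t.lTensor R (Th P A' k s) = Th P A'' k (Algebra.TensorProduct.map φ (AlgHom.id A R) s) := by
  induction s with
  | zero => simp
  | add x y hx hy => simp only [map_add, hx, hy]
  | tmul w r =>
    rw [Th_tmul, Algebra.TensorProduct.map_tmul, Th_tmul, ← LinearMap.comp_apply,
      ← LinearMap.lTensor_comp]
    congr 2
    ext p
    simp [ht]

theorem th_ker (A' : Type u) [CommRing A'] [Algebra A A'] (k : R ⊗[A] P)
    (hk : P.subtype.lTensor R k = 0) :
    (P.map (algebraMap A A')).subtype.lTensor (A' ⊗[A] R) (th P A' k) = 0 := by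
  unfold th
  rw [cbc_nat, LinearEquiv.map_eq_zero_iff, ← LinearMap.comp_apply, ← LinearMap.lTensor_comp]
  have : ((P.map (algebraMap A A')).subtype.restrictScalars A ∘ₗ bb P A' 1) =
      (Algebra.linearMap A A') ∘ₗ P.subtype := by
    ext p
    simp
  rw [this, LinearMap.lTensor_comp, LinearMap.comp_apply, hk, map_zero]

theorem D1 [IsNoetherianRing A] [Algebra.FiniteType A R] (A' : Type u) [CommRing A']
    [Algebra A A'] [IsNoetherianRing A'] (q' : Ideal (A' ⊗[A] R)) [hq' : q'.IsPrime]
    (hP : P = q'.comap (algebraMap A (A' ⊗[A] R)))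
    (h : ∀ k : R ⊗[A] P, P.subtype.lTensor R k = 0 → ∃ s ∉ q', s • th P A' k = 0) :
    FlatAt A' q' := by
  have : P.IsPrime := by rw [hP]; infer_instance
  have : Algebra.FiniteType A' (A' ⊗[A] R) := inferInstance
  have : IsNoetherianRing (A' ⊗[A] R) := Algebra.FiniteType.isNoetherianRing A' _
  obtain ⟨g, hg, hg'⟩ := GF (R := R) P
  have hgq : algebraMap R (A' ⊗[A] R) (algebraMap A R g) ∉ q' := by
    rw [← IsScalarTower.algebraMap_apply]
    intro hh
    apply hg
    rw [hP]; exact hh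
  have hpow : ∀ s ∈ Submonoid.powers (algebraMap A R g),
      algebraMap R (A' ⊗[A] R) s ∈ q'.primeCompl := by
    rintro _ ⟨n, rfl⟩
    simp only [map_pow]
    exact pow_mem (show _ ∈ q'.primeCompl from hgq) n
  refine ⟨hq', L_main (P.map (algebraMap A A')) q' ?_ ?_ ?_⟩
  · rw [Ideal.map_map, ← IsScalarTower.algebraMap_eq, hP]
    exact Ideal.map_comap_le
  · intro x hx
    obtain ⟨y, rfl⟩ := (Algebra.IsPushout.cancelBaseChange A R A' (A' ⊗[A] R)
      (P.map (algebraMap A A'))).symm.surjective x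
    rw [cbc_nat, LinearEquiv.map_eq_zero_iff] at hx
    obtain ⟨s, hs, h1⟩ := K_main P (Submonoid.powers (algebraMap A R g)) hg' (bb P A')
      ((P.map (algebraMap A A')).subtype.restrictScalars A) Subtype.val_injective
      (fun w p => by simp [Algebra.smul_def]) (fun n => by
        rw [Ideal.smul_top_eq_map]; exact n.2) y hx
    have key : ∀ z ∈ AddSubgroup.closure
      {z | ∃ w k, P.subtype.lTensor R k = 0 ∧ z = (bb P A' w).lTensor R k}, ∃ t ∈ q'.primeCompl,
        t • (Algebra.IsPushout.cancelBaseChange A R A' (A' ⊗[A] R)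
          (P.map (algebraMap A A'))).symm z = 0 := by
      intro z hz
      induction hz using AddSubgroup.closure_induction with
      | mem z hz =>
        obtain ⟨w, k, hk, rfl⟩ := hz
        obtain ⟨t, ht, ht'⟩ := h k hk
        exact ⟨t, ht, by rw [cbc_bb, smul_comm, ht', smul_zero]⟩
      | zero => exact ⟨1, one_mem _, by rw [LinearEquiv.map_zero, smul_zero]⟩
      | add x y _ _ hx hy =>
        obtain ⟨t, ht, h1⟩ := hx
        obtain ⟨t', ht', h2⟩ := hy
        refine ⟨t * t', mul_mem ht ht', ?_⟩
        rw [map_add, smul_add, mul_smul t t' (LinearEquiv.symm _ y), h2, mul_comm, mul_smul, h1]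
        simp
      | neg x _ hx =>
        obtain ⟨t, ht, h1⟩ := hx
        exact ⟨t, ht, by
          rw [← neg_one_smul R x, LinearEquiv.map_smul, smul_comm, h1, smul_zero]⟩
    obtain ⟨t, ht, h2⟩ := key _ h1
    refine ⟨t * algebraMap R _ s, mul_mem ht (hpow s hs), ?_⟩
    rw [mul_smul, algebraMap_smul, ← map_smul, h2]
  · intro X _ _ Y hX
    let _ : Module A X := Module.compHom X (algebraMap A A')
    have : IsScalarTower A A' X := ⟨fun a b x => by
      rw [Algebra.smul_def, mul_smul]; rfl⟩
    refine KT_bc (A := A) (R := R) Y.subtype (Submonoid.powers (algebraMap A R g)) _ hpow ?_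
    apply hg' _ _ _ Subtype.val_injective
    intro i hi x
    rw [← algebraMap_smul A' i x]
    exact hX _ (Ideal.mem_map_of_mem _ hi) x

end D

section D
attribute [local instance] Algebra.TensorProduct.rightAlgebra

variable {A R : Type u} [CommRing A] [CommRing R] [Algebra A R] (P : Ideal A)

/-- transition -/
noncomputable def tt {A' A'' : Type u} [CommRing A'] [Algebra A A'] [CommRing A''] [Algebra A A'']
    (φ : A' →ₐ[A] A'') : P.map (algebraMap A A') →ₗ[A] P.map (algebraMap A A'') where
  toFun x := ⟨φ x, by
    have h := Ideal.mem_map_of_mem φ.toRingHom x.2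
    rw [Ideal.map_map] at h
    have e : φ.toRingHom.comp (algebraMap A A') = algebraMap A A'' := φ.comp_algebraMap
    rw [e] at h
    exact h⟩
  map_add' x y := by ext; simp
  map_smul' c x := by ext; simp

@[simp] theorem tt_apply {A' A'' : Type u} [CommRing A'] [Algebra A A'] [CommRing A'']
    [Algebra A A''] (φ : A' →ₐ[A] A'') (x) : (tt P φ x : A'') = φ x := rfl

/-- fg subalgebras -/
abbrev FS (A A' : Type u) [CommRing A] [CommRing A'] [Algebra A A'] : Type u :=
  {μ : Subalgebra A A' // μ.FG}

instance FS_dir (A A' : Type u) [CommRing A] [CommRing A'] [Algebra A A'] :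
    IsDirected (FS A A') (· ≤ ·) :=
  ⟨fun a b => ⟨⟨a.1 ⊔ b.1, a.2.sup b.2⟩, le_sup_left (a := a.1), le_sup_right (a := a.1)⟩⟩

instance FS_ne (A A' : Type u) [CommRing A] [CommRing A'] [Algebra A A'] :
    Nonempty (FS A A') := ⟨⟨⊥, Subalgebra.fg_bot⟩⟩

theorem FS_mem {A A' : Type u} [CommRing A] [CommRing A'] [Algebra A A'] (w : A') :
    ∃ μ : FS A A', w ∈ μ.1 :=
  ⟨⟨Algebra.adjoin A {w}, ⟨{w}, by simp⟩⟩, Algebra.self_mem_adjoin_singleton A w⟩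

/-- map of tensor products -/
noncomputable abbrev mp {A' A'' : Type u} [CommRing A'] [Algebra A A'] [CommRing A''] [Algebra A A'']
    (φ : A' →ₐ[A] A'') : A' ⊗[A] R →ₐ[A] A'' ⊗[A] R :=
  Algebra.TensorProduct.map φ (AlgHom.id A R)

theorem mp_mp {A' A'' A''' : Type u} [CommRing A'] [Algebra A A'] [CommRing A''] [Algebra A A'']
    [CommRing A'''] [Algebra A A'''] (φ : A' →ₐ[A] A'') (ψ : A'' →ₐ[A] A''') (χ : A' →ₐ[A] A''')
    (h : ψ.comp φ = χ) (s : A' ⊗[A] R) :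
    mp ψ (mp φ s) = mp χ s := by
  subst h
  induction s with
  | zero => simp
  | add x y hx hy => simp only [map_add, hx, hy]
  | tmul w r => simp

theorem FS_lift {A' : Type u} [CommRing A'] [Algebra A A'] (s : A' ⊗[A] R) :
    ∃ (μ : FS A A') (t : μ.1 ⊗[A] R), mp μ.1.val t = s := by
  induction s with
  | zero => exact ⟨(FS_ne A A').some, 0, by simp⟩
  | add x y hx hy =>
    obtain ⟨μ, t, rfl⟩ := hx
    obtain ⟨ν, t', rfl⟩ := hy
    obtain ⟨l, h1, h2⟩ := exists_ge_ge μ ν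
    refine ⟨l, mp (Subalgebra.inclusion h1) t + mp (Subalgebra.inclusion h2) t', ?_⟩
    rw [map_add, mp_mp _ _ μ.1.val rfl, mp_mp _ _ ν.1.val rfl]
  | tmul w r =>
    obtain ⟨μ, h⟩ := FS_mem (A := A) w
    exact ⟨μ, (⟨w, h⟩ : μ.1) ⊗ₜ r, by simp⟩

theorem FS_map_mem {A' : Type u} [CommRing A'] [Algebra A A'] (m : A')
    (hm : m ∈ P.map (algebraMap A A')) :
    ∃ (μ : FS A A') (n : P.map (algebraMap A μ.1)), μ.1.val (n : μ.1) = m := by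
  induction hm using Submodule.span_induction with
  | mem x hx =>
    obtain ⟨p, hp, rfl⟩ := hx
    exact ⟨(FS_ne A A').some, ⟨algebraMap A _ p, Ideal.mem_map_of_mem _ hp⟩, by simp⟩
  | zero => exact ⟨(FS_ne A A').some, 0, by simp⟩
  | add x y _ _ hx hy =>
    obtain ⟨μ, t, rfl⟩ := hx
    obtain ⟨ν, t', rfl⟩ := hy
    obtain ⟨l, h1, h2⟩ := exists_ge_ge μ ν
    exact ⟨l, tt P (Subalgebra.inclusion h1) t + tt P (Subalgebra.inclusion h2) t', rfl⟩
  | smul a x _ hx =>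
    obtain ⟨μ, t, rfl⟩ := hx
    obtain ⟨ν, h⟩ := FS_mem (A := A) a
    obtain ⟨l, h1, h2⟩ := exists_ge_ge μ ν
    exact ⟨l, (⟨a, h2 h⟩ : l.1) • tt P (Subalgebra.inclusion h1) t, rfl⟩

/-- killing `th` -/
def KK (A' : Type u) [CommRing A'] [Algebra A A'] (q : Ideal (A' ⊗[A] R)) (k : R ⊗[A] P) : Prop :=
  ∃ s ∉ q, s • th P A' k = 0

theorem KK_of (A' : Type u) [CommRing A'] [Algebra A A'] (q : Ideal (A' ⊗[A] R)) (k : R ⊗[A] P)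
    (s : A' ⊗[A] R) (hs : s ∉ q) (h : Th P A' k s = 0) : KK P A' q k :=
  ⟨s, hs, by rw [← Th_eq, h, LinearEquiv.map_zero]⟩

theorem KK_zero (A' : Type u) [CommRing A'] [Algebra A A'] (q : Ideal (A' ⊗[A] R)) [q.IsPrime] :
    KK P A' q 0 := by
  refine ⟨1, (Ideal.ne_top_iff_one _).1 (Ideal.IsPrime.ne_top inferInstance), ?_⟩
  unfold th
  rw [LinearMap.map_zero, LinearEquiv.map_zero, smul_zero]

theorem KK_add (A' : Type u) [CommRing A'] [Algebra A A'] (q : Ideal (A' ⊗[A] R)) [q.IsPrime]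
    (x y : R ⊗[A] P) (hx : KK P A' q x) (hy : KK P A' q y) : KK P A' q (x + y) := by
  obtain ⟨t, ht, h1⟩ := hx
  obtain ⟨t', ht', h2⟩ := hy
  refine ⟨t * t', (Ideal.primeCompl _).mul_mem ht ht', ?_⟩
  have : th P A' (x + y) = th P A' x + th P A' y := by
    unfold th
    rw [LinearMap.map_add, LinearEquiv.map_add]
  rw [this, smul_add, mul_smul t t' (th P A' y), h2, mul_comm, mul_smul, h1, smul_zero,
    smul_zero, add_zero]

theorem KK_smul (A' : Type u) [CommRing A'] [Algebra A A'] (q : Ideal (A' ⊗[A] R))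
    (r : R) (x : R ⊗[A] P) (hx : KK P A' q x) : KK P A' q (r • x) := by
  obtain ⟨t, ht, h1⟩ := hx
  exact ⟨t, ht, by rw [th_smul, smul_comm, h1, smul_zero]⟩

theorem D2k (A' : Type u) [CommRing A'] [Algebra A A'] (q : Ideal (A' ⊗[A] R)) (k : R ⊗[A] P)
    (h : ∃ s ∉ q, s • th P A' k = 0) :
    ∃ (μ : FS A A') (s : μ.1 ⊗[A] R), mp μ.1.val s ∉ q ∧ Th P μ.1 k s = 0 := by
  obtain ⟨s, hs, h⟩ := h
  rw [← Th_eq, LinearEquiv.map_eq_zero_iff] at h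
  obtain ⟨μ, t, rfl⟩ := FS_lift s
  have h1 : (tt P μ.1.val).lTensor R (Th P μ.1 k t) = 0 := by
    rw [Th_nat P _ _ μ.1.val _ (fun _ => rfl), h]
  obtain ⟨ν, hν, h2⟩ := colim_zero (R := R) (fun μ : FS A A' => P.map (algebraMap A μ.1))
    (fun μ => tt P μ.1.val) (fun i j hij => tt P (Subalgebra.inclusion hij))
    (fun i j hij => by ext; rfl)
    (fun i x y hxy => by
      ext
      exact congrArg (fun z : P.map (algebraMap A A') => (z : A')) hxy)
    (fun m => by
      obtain ⟨μ, n, h⟩ := FS_map_mem P m.1 m.2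
      exact ⟨μ, n, Subtype.ext h⟩) μ _ h1
  refine ⟨ν, mp (Subalgebra.inclusion hν) t, ?_, ?_⟩
  · rwa [mp_mp _ _ μ.1.val rfl]
  · rw [← Th_nat P _ _ _ (tt P (Subalgebra.inclusion hν)) (fun _ => rfl), h2]

theorem D2b [IsNoetherianRing A] [Algebra.FiniteType A R] (A' : Type u) [CommRing A']
    [Algebra A A'] (q : Ideal (A' ⊗[A] R)) [q.IsPrime]
    (h : ∀ k : R ⊗[A] P, P.subtype.lTensor R k = 0 → ∃ s ∉ q, s • th P A' k = 0) :
    ∃ μ : FS A A', ∀ k : R ⊗[A] P, P.subtype.lTensor R k = 0 →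
      KK P μ.1 (q.comap (mp (R := R) μ.1.val)) k := by
  classical
  have : IsNoetherianRing R := Algebra.FiniteType.isNoetherianRing A R
  have : Module.Finite R (R ⊗[A] P) := inferInstance
  have : IsNoetherian R (R ⊗[A] P) := isNoetherian_of_isNoetherianRing_of_finite R _
  let K : Submodule R (R ⊗[A] P) := LinearMap.ker (P.subtype.baseChange R)
  obtain ⟨T, hT⟩ := IsNoetherian.noetherian K
  have hTk : ∀ k ∈ T, P.subtype.lTensor R k = 0 := fun k hk => by
    have : k ∈ K := hT ▸ Submodule.subset_span hk
    exact this
  choose! μ s hs hs' using fun k (hk : k ∈ T) => D2k P A' q k (h k (hTk k hk))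
  obtain ⟨ν, hν⟩ := (T.image μ).exists_le
  have hν' : ∀ k ∈ T, μ k ≤ ν := fun k hk => hν _ (Finset.mem_image_of_mem _ hk)
  refine ⟨ν, fun k hk => ?_⟩
  have hkK : k ∈ Submodule.span R (T : Set (R ⊗[A] P)) := by rw [hT]; exact hk
  clear hk
  induction hkK using Submodule.span_induction with
  | mem k hk =>
    refine KK_of _ _ _ _ (mp (Subalgebra.inclusion (hν' k hk)) (s k)) ?_ ?_
    · rw [Ideal.mem_comap, mp_mp _ _ (μ k).1.val rfl]
      exact hs k hk
    · rw [← Th_nat P _ _ _ (tt P (Subalgebra.inclusion (hν' k hk))) (fun _ => rfl),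
        hs' k hk, LinearMap.map_zero]
  | zero => exact KK_zero _ _ _
  | add x y _ _ hx hy => exact KK_add _ _ _ _ _ hx hy
  | smul r x _ hx => exact KK_smul _ _ _ _ _ hx

theorem D3 [Algebra.FiniteType A R] (B A' : Type u) [CommRing A'] [CommRing B]
    [Algebra A A'] [Algebra A B] [Algebra B A'] [IsScalarTower A B A'] [IsNoetherianRing B]
    (φ : B →ₐ[A] A') (hφ : ∀ x, φ x = algebraMap B A' x)
    (q : Ideal (A' ⊗[A] R)) 
    (hfl : FlatAt B (q.comap (mp (R := R) φ))) :
    ∃ s ∉ q, ∀ a : Ideal A', KT (A' ⊗[A] R) (Submonoid.powers s) a.subtype := by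
  obtain ⟨s, hs, h1⟩ := N_main _ hfl
  refine ⟨mp φ s, hs, fun a => ?_⟩
  have hfl2 : Module.Flat B (Localization.Away s) := by
    refine flat_of_KT (B ⊗[A] R) (Submonoid.powers s) _ (Algebra.linearMap _ _) fun b => ?_
    refine KT_of_primes s _ fun q' hq' hsq' => ?_
    exact (h1 q' hq' hsq').2 b
  let _ : Algebra (B ⊗[A] R) (A' ⊗[A] R) := (mp (R := R) φ).toRingHom.toAlgebra
  have : IsScalarTower B (B ⊗[A] R) (A' ⊗[A] R) := IsScalarTower.of_algebraMap_eq fun x => by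
    simp [RingHom.algebraMap_toAlgebra, hφ]
  have hp : Algebra.IsPushout B A' (B ⊗[A] R) (A' ⊗[A] R) := by
    apply Algebra.IsPushout.tensorProduct_tensorProduct
    ext x
    simp [RingHom.algebraMap_toAlgebra]
  have hp' := hp.symm
  refine KT_bc (A := B) (R := B ⊗[A] R) a.subtype (Submonoid.powers s) _ ?_ ?_
  · rintro _ ⟨n, rfl⟩
    exact ⟨n, by rw [map_pow]; rfl⟩
  · exact KT_of_flat _ _ _ (Localization.Away s) (Algebra.linearMap _ _) Subtype.val_injective

theorem D2 [IsNoetherianRing A] [Algebra.FiniteType A R] (A' : Type u) [CommRing A']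
    [Algebra A A'] (q : Ideal (A' ⊗[A] R)) (hq : FlatAt A' q) :
    ∃ s ∉ q, ∀ a : Ideal A', KT (A' ⊗[A] R) (Submonoid.powers s) a.subtype := by
  obtain ⟨hqp, hq⟩ := hq
  let P := q.comap (algebraMap A (A' ⊗[A] R))
  obtain ⟨μ, hμ⟩ := D2b P A' q (fun k hk => hq _ _ (th_ker P A' k hk))
  have : Algebra.FiniteType A μ.1 := (Subalgebra.fg_iff_finiteType _).1 μ.2
  have : IsNoetherianRing μ.1 := Algebra.FiniteType.isNoetherianRing A μ.1
  have hfl : FlatAt μ.1 (q.comap (mp (R := R) μ.1.val)) := by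
    refine D1 P μ.1 _ ?_ hμ
    ext x
    simp only [P, Ideal.mem_comap]
    rw [AlgHom.commutes]
  exact D3 μ.1 A' μ.1.val (fun _ => rfl) q hfl

end D

theorem KT_equiv {A R R' : Type u} [CommRing A] [CommRing R] [CommRing R'] [Algebra A R]
    [Algebra A R'] (e : R ≃ₐ[A] R') {Y X : Type u} [AddCommGroup Y] [Module A Y]
    [AddCommGroup X] [Module A X] (f : Y →ₗ[A] X) (S : Submonoid R) (S' : Submonoid R')
    (hS : ∀ s ∈ S, e s ∈ S') (h : KT R S f) : KT R' S' f := by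
  intro x hx
  have h1 : ∀ (s : R) (y : R ⊗[A] Y), e.toLinearMap.rTensor Y (s • y) =
      e s • e.toLinearMap.rTensor Y y := by
    intro s y
    induction y with
    | zero => simp
    | add y z hy hz => simp only [smul_add, map_add, hy, hz]
    | tmul r y => simp [smul_tmul']
  obtain ⟨s, hs, h2⟩ := h (e.symm.toLinearMap.rTensor Y x) (by
    rw [← rl_comm, hx, map_zero])
  refine ⟨e s, hS s hs, ?_⟩
  have h3 : e.toLinearMap.rTensor Y (e.symm.toLinearMap.rTensor Y x) = x := by
    rw [← LinearMap.comp_apply, ← LinearMap.rTensor_comp]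
    have : e.toLinearMap ∘ₗ e.symm.toLinearMap = LinearMap.id := by ext; simp
    rw [this]; simp
  rw [← h3, ← h1, h2, map_zero]

theorem D4a {A0 R0 A R : Type u} [CommRing A0] [CommRing R0] [Algebra A0 R0] [CommRing A]
    [CommRing R] [Algebra A R] [Algebra A0 A] [IsNoetherianRing A0] [Algebra.FiniteType A0 R0]
    (e : A ⊗[A0] R0 ≃ₐ[A] R) (q : Ideal R) (hq : FlatAt A q) :
    ∃ s ∉ q, ∀ a : Ideal A, KT R (Submonoid.powers s) a.subtype := by
  obtain ⟨hqp, hq⟩ := hq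
  have h1 : FlatAt A (q.comap e) := by
    refine ⟨inferInstance, fun a => KT_equiv e.symm _ q.primeCompl _ (fun s hs => ?_) (hq a)⟩
    change ¬ (e (e.symm s) ∈ q)
    simpa using hs
  obtain ⟨s, hs, h2⟩ := D2 A _ h1
  refine ⟨e s, hs, fun a => KT_equiv e _ (Submonoid.powers s) _ ?_ (h2 a)⟩
  rintro _ ⟨n, rfl⟩
  exact ⟨n, by simp⟩

theorem D4 {A R : Type u} [CommRing A] [CommRing R] [Algebra A R]
    [Algebra.FinitePresentation A R] (q : Ideal R) (hq : FlatAt A q) :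
    ∃ s ∉ q, ∀ a : Ideal A, KT R (Submonoid.powers s) a.subtype := by
  let P := Algebra.Presentation.ofFinitePresentation A R
  have : IsNoetherianRing P.Core := Algebra.FiniteType.isNoetherianRing ℤ _
  have : Algebra.FiniteType P.Core (P.ModelOfHasCoeffs P.Core) := inferInstance
  exact D4a (P.tensorModelOfHasCoeffsEquiv P.Core) q hq

theorem D5 {A R : Type u} [CommRing A] [CommRing R] [Algebra A R]
    [Algebra.FinitePresentation A R] (J : Ideal R)
    (h : ∀ q : Ideal R, q.IsPrime → J ≤ q → FlatAt A q) :
    ∃ f : R, f - 1 ∈ J ∧ ∀ a : Ideal A, KT R (Submonoid.powers f) a.subtype := by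
  let b : Ideal R := Ideal.span {s | ∀ a : Ideal A, KT R (Submonoid.powers s) a.subtype}
  have hb : b ⊔ J = ⊤ := by
    by_contra hne
    obtain ⟨m, hm, hle⟩ := Ideal.exists_le_maximal _ hne
    obtain ⟨s, hs, h1⟩ := D4 m (h m hm.isPrime (le_sup_right.trans hle))
    exact hs (hle (Ideal.mem_sup_left (Ideal.subset_span h1)))
  obtain ⟨f, hf, j, hj, hfj⟩ := Submodule.mem_sup.1 ((Ideal.eq_top_iff_one _).1 hb)
  refine ⟨f, ?_, fun a => KT_of_primes f _ fun q hq hfq => ?_⟩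
  · rw [← hfj]
    simpa using hj
  · have : ∃ s, (∀ a : Ideal A, KT R (Submonoid.powers s) a.subtype) ∧ s ∉ q := by
      by_contra! hc
      exact hfq ((Ideal.span_le.2 hc : b ≤ q) hf)
    obtain ⟨s, h1, h2⟩ := this
    refine KT.mono _ _ ?_ (h1 a)
    rw [Submonoid.powers_le]
    exact h2

theorem D6 {A R : Type u} [CommRing A] [CommRing R] [Algebra A R]
    [Algebra.FinitePresentation A R] (J : Ideal R)
    (h : ∀ q : Ideal R, ∀ _ : q.IsPrime, J ≤ q → Module.Flat A (Localization.AtPrime q)) :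
    ∃ f : R, f - 1 ∈ J ∧ Module.Flat A (Localization.Away f) := by
  obtain ⟨f, hf, h1⟩ := D5 (A := A) J (fun q hq hJ => by
    have := h q hq hJ
    exact ⟨hq, fun a => KT_of_flat _ _ _ (Localization.AtPrime q) (Algebra.linearMap _ _)
      Subtype.val_injective⟩)
  exact ⟨f, hf, flat_of_KT _ _ _ (Algebra.linearMap R _) h1⟩

theorem D7 {R : Type u} [CommRing R] (J : Ideal R) (f : R) (hf : f - 1 ∈ J) :
    Function.Bijective (Ideal.quotientMap (J.map (algebraMap R (Localization.Away f)))
      (algebraMap R (Localization.Away f)) Ideal.le_comap_map) := by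
  have hpow : ∀ n : ℕ, f ^ n - 1 ∈ J := fun n => by
    rw [← Ideal.Quotient.eq_zero_iff_mem] at hf ⊢
    rw [map_sub, sub_eq_zero, map_one] at hf ⊢
    rw [map_pow, hf, one_pow]
  constructor
  · rw [injective_iff_map_eq_zero]
    intro x hx
    obtain ⟨x, rfl⟩ := Ideal.Quotient.mk_surjective x
    rw [Ideal.quotientMap_mk, Ideal.Quotient.eq_zero_iff_mem,
      IsLocalization.algebraMap_mem_map_algebraMap_iff (Submonoid.powers f)] at hx
    obtain ⟨_, ⟨n, rfl⟩, hm⟩ := hx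
    rw [Ideal.Quotient.eq_zero_iff_mem]
    have := J.sub_mem hm (J.mul_mem_right x (hpow n))
    simp only at this
    convert this using 1
    ring
  · intro y
    obtain ⟨y, rfl⟩ := Ideal.Quotient.mk_surjective y
    obtain ⟨r, s, rfl⟩ := IsLocalization.exists_mk'_eq (Submonoid.powers f) y
    have hs : (s : R) - 1 ∈ J := by
      obtain ⟨n, hn⟩ := s.2
      rw [← hn]
      exact hpow n
    refine ⟨Ideal.Quotient.mk _ r, ?_⟩
    rw [Ideal.quotientMap_mk, Ideal.Quotient.eq]
    have h1 := Ideal.mul_mem_right (IsLocalization.mk' (Localization.Away f) r s) _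
      (Ideal.mem_map_of_mem (algebraMap R (Localization.Away f)) hs)
    convert h1 using 1
    rw [map_sub, sub_mul, map_one, one_mul, IsLocalization.mk'_spec']

theorem D8 {A R : Type u} [CommRing A] [CommRing R] [Algebra A R]
    (I : Ideal A) (hfp : Algebra.FinitePresentation A R)
    (hflat : ∀ (q : Ideal R) (_ : q.IsPrime), I.map (algebraMap A R) ≤ q →
      @Module.Flat A (Localization.AtPrime q) _ _ 
        ((algebraMap R (Localization.AtPrime q)).comp (algebraMap A R)).toAlgebra.toModule) :
    ∃ (R' : Type u) (_ : CommRing R') (_ : Algebra R R'),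
      Algebra.Etale R R' ∧
      Function.Bijective (Ideal.quotientMap
        ((I.map (algebraMap A R)).map (algebraMap R R')) (algebraMap R R')
        Ideal.le_comap_map) ∧
      @Module.Flat A R' _ _ ((algebraMap R R').comp (algebraMap A R)).toAlgebra.toModule := by
  have key : ∀ (S : Submonoid R), ((algebraMap R (Localization S)).comp (algebraMap A R)).toAlgebra
      = (inferInstance : Algebra A (Localization S)) := by
    intro S
    apply Algebra.algebra_ext
    intro r
    exact (IsScalarTower.algebraMap_apply A R (Localization S) r).symm
  obtain ⟨f, hf, h⟩ := D6 (A := A) (I.map (algebraMap A R)) (fun q hq hI => by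
    have := hflat q hq hI
    rw [key] at this
    exact this)
  refine ⟨Localization.Away f, inferInstance, inferInstance,
    Algebra.Etale.of_isLocalizationAway f, D7 _ f hf, ?_⟩
  rw [key]
  exact h

end Helpers

/-- Spreading out flatness over a Henselian pair: if the finitely presented `A`-algebra `R`
is flat over `A` at every prime containing `I·R`, then there is an étale `R`-algebra `R'`
with `R/IR ≅ R'/IR'` which is flat over `A`. -/
theorem exists_etale_flat_of_flat_on_closed_fiber
    {A R : Type u} [CommRing A] [CommRing R] [Algebra A R]
    (I : Ideal A) [HenselianRing A I]
    (hfp : Algebra.FinitePresentation A R)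
    (hflat : ∀ (q : Ideal R) (_ : q.IsPrime), I.map (algebraMap A R) ≤ q →
      RingHomFlat ((algebraMap R (Localization.AtPrime q)).comp (algebraMap A R))) :
    ∃ (R' : Type u) (_ : CommRing R') (_ : Algebra R R'),
      Algebra.Etale R R' ∧
      Function.Bijective (Ideal.quotientMap
        ((I.map (algebraMap A R)).map (algebraMap R R')) (algebraMap R R')
        Ideal.le_comap_map) ∧
      RingHomFlat ((algebraMap R R').comp (algebraMap A R)) := by
  exact D8 I hfp hflat
end

section
/- Spreading out smoothness over a Henselian pair: let (A, I) be a Henselian pair and let R be a finitely presented A-algebra such that Spec R → Spec A is smooth at every point of V(I·R), i.e. for every prime ideal q of R containing I·R there exists g ∈ R with g ∉ q such that the localization R_g of R away from g is a smooth A-algebra. Then there exists an étale R-algebra R′ such that the induced map R/(I·R) → R′/(I·R′) is an isomorphism and R′ is a smooth A-algebra. -/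
universe u

theorem ringHomSmooth_algebraMap_iff {A C : Type u} [CommRing A] [CommRing C] [i : Algebra A C] :
    RingHomSmooth (algebraMap A C) ↔ Algebra.Smooth A C := by
  have h : (algebraMap A C).toAlgebra = i := Algebra.algebra_ext _ _ fun _ => rfl
  change @Algebra.Smooth A _ C _ (algebraMap A C).toAlgebra ↔ _
  rw [h]

theorem bijective_quotientMap_away {R : Type u} [CommRing R] (K : Ideal R) (f : R)
    (hf : 1 - f ∈ K) :
    Function.Bijective (Ideal.quotientMap
        (K.map (algebraMap R (Localization.Away f))) (algebraMap R (Localization.Away f))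
        Ideal.le_comap_map) := by
  have hpow : ∀ s ∈ Submonoid.powers f, 1 - s ∈ K := by
    rintro _ ⟨n, rfl⟩
    have := sub_dvd_pow_sub_pow (1 : R) f n
    rw [one_pow] at this
    exact Ideal.mem_of_dvd K this hf
  constructor
  · apply Ideal.quotientMap_injective'
    intro x hx
    rw [Ideal.mem_comap, IsLocalization.mem_map_algebraMap_iff (Submonoid.powers f)] at hx
    obtain ⟨⟨b, s⟩, h⟩ := hx
    rw [← map_mul, IsLocalization.eq_iff_exists (Submonoid.powers f)] at h
    obtain ⟨c, hc⟩ := h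
    have h1 := hpow (c * s : R) (mul_mem c.2 s.2)
    have h2 : (c : R) * (x * s) ∈ K := by
      rw [hc]; exact K.mul_mem_left _ b.2
    have : x = x * (1 - c * s) + c * (x * s) := by ring
    rw [this]
    exact K.add_mem (K.mul_mem_left _ h1) h2
  · intro y
    obtain ⟨y, rfl⟩ := Ideal.Quotient.mk_surjective y
    obtain ⟨⟨r, s⟩, h⟩ := IsLocalization.surj (Submonoid.powers f) y
    refine ⟨Ideal.Quotient.mk _ r, ?_⟩
    rw [Ideal.quotientMap_mk, Ideal.Quotient.eq]
    simp only at h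
    rw [← h]
    have : y * algebraMap R _ (s : R) - y = -y * algebraMap R _ (1 - s : R) := by
      rw [map_sub, map_one]; ring
    rw [this]
    exact Ideal.mul_mem_left _ _ (Ideal.mem_map_of_mem _ (hpow _ s.2))

/-- Spreading out smoothness over a Henselian pair: if `Spec R → Spec A` is smooth at every
point of `V(I·R)`, then there is an étale `R`-algebra `R'` with `R/IR ≅ R'/IR'` which is
smooth over `A`. -/
theorem exists_etale_smooth_of_smooth_on_closed_fiber
    {A R : Type u} [CommRing A] [CommRing R] [Algebra A R]
    (I : Ideal A) [HenselianRing A I]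
    (hfp : Algebra.FinitePresentation A R)
    (hsm : ∀ (q : Ideal R) (_ : q.IsPrime), I.map (algebraMap A R) ≤ q →
      ∃ g : R, g ∉ q ∧
        RingHomSmooth ((algebraMap R (Localization.Away g)).comp (algebraMap A R))) :
    ∃ (R' : Type u) (_ : CommRing R') (_ : Algebra R R'),
      Algebra.Etale R R' ∧
      Function.Bijective (Ideal.quotientMap
        ((I.map (algebraMap A R)).map (algebraMap R R')) (algebraMap R R')
        Ideal.le_comap_map) ∧
      RingHomSmooth ((algebraMap R R').comp (algebraMap A R)) := by
  obtain ⟨J, hJ⟩ := (PrimeSpectrum.isClosed_iff_zeroLocus_ideal _).1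
    (Algebra.isOpen_smoothLocus (R := A) (A := R)).isClosed_compl
  have htop : J ⊔ I.map (algebraMap A R) = ⊤ := by
    by_contra hne
    obtain ⟨m, hm, hle⟩ := Ideal.exists_le_maximal _ hne
    obtain ⟨g, hg, hs⟩ := hsm m hm.isPrime (le_sup_right.trans hle)
    rw [← IsScalarTower.algebraMap_eq, ringHomSmooth_algebraMap_iff,
      ← Algebra.basicOpen_subset_smoothLocus_iff_smooth] at hs
    have h1 : (⟨m, hm.isPrime⟩ : PrimeSpectrum R) ∈ Algebra.smoothLocus A R := hs hg
    have h2 : (⟨m, hm.isPrime⟩ : PrimeSpectrum R) ∈ (Algebra.smoothLocus A R)ᶜ := by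
      rw [hJ]
      exact le_sup_left.trans hle
    exact h2 h1
  obtain ⟨f, hf, k, hk, hfk⟩ := Submodule.mem_sup.1 ((Ideal.eq_top_iff_one _).1 htop)
  refine ⟨Localization.Away f, inferInstance, inferInstance, ?_, ?_, ?_⟩
  · exact Algebra.Etale.of_isLocalizationAway f
  · apply bijective_quotientMap_away
    rw [← hfk, add_sub_cancel_left]
    exact hk
  · rw [← IsScalarTower.algebraMap_eq, ringHomSmooth_algebraMap_iff,
      ← Algebra.basicOpen_subset_smoothLocus_iff_smooth]
    intro p hp
    by_contra hn
    have : p ∈ (Algebra.smoothLocus A R)ᶜ := hn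
    rw [hJ] at this
    exact hp (this hf)
end

section
/- Germs of smooth functions form a non-separated Henselian pair: fix n ≥ 1, let R be the ring of germs at the origin of C^∞ functions ℝⁿ → ℝ (germs at 0 of functions that are smooth on a neighborhood of 0, i.e. the corresponding subring of the germ ring Filter.Germ (𝓝 0) ℝ), and let I ⊆ R be the ideal of germs vanishing at the origin. Then (R, I) is a Henselian pair. Moreover, the germ of the function x ↦ exp(−1/‖x‖²) (extended by 0 at the origin) is a nonzero element of ⋂_{r ≥ 1} I^r; in particular R is not I-adically separated. -/
open scoped Topology

open Filter Classical

/-- The subring of `Filter.Germ (𝓝 0) ℝ` consisting of germs at the origin of functions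
`ℝⁿ → ℝ` that are `C^∞` on a neighborhood of the origin. -/
noncomputable def smoothGerms (n : ℕ) :
    Subring (Filter.Germ (𝓝 (0 : EuclideanSpace ℝ (Fin n))) ℝ) where
  carrier := {φ | ∃ f : EuclideanSpace ℝ (Fin n) → ℝ,
    (∀ᶠ x in 𝓝 (0 : EuclideanSpace ℝ (Fin n)), ContDiffAt ℝ (⊤ : ℕ∞) f x) ∧ φ = Filter.Germ.ofFun f}
  one_mem' := ⟨fun _ => 1, Filter.Eventually.of_forall fun _ => contDiffAt_const, rfl⟩
  zero_mem' := ⟨fun _ => 0, Filter.Eventually.of_forall fun _ => contDiffAt_const, rfl⟩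
  mul_mem' := by
    rintro a b ⟨f, hf, rfl⟩ ⟨g, hg, rfl⟩
    exact ⟨f * g, (hf.and hg).mono fun x hx => hx.1.mul hx.2, rfl⟩
  add_mem' := by
    rintro a b ⟨f, hf, rfl⟩ ⟨g, hg, rfl⟩
    exact ⟨f + g, (hf.and hg).mono fun x hx => hx.1.add hx.2, rfl⟩
  neg_mem' := by
    rintro a ⟨f, hf, rfl⟩
    exact ⟨-f, hf.mono fun x hx => hx.neg, rfl⟩

/-- Evaluation at the origin, as a ring homomorphism on germs of smooth functions. -/
noncomputable def smoothGermsEval (n : ℕ) : smoothGerms n →+* ℝ :=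
  Filter.Germ.valueRingHom.comp (smoothGerms n).subtype


lemma ift_aux {E : Type*} [NormedAddCommGroup E] [NormedSpace ℝ E] [CompleteSpace E]
    (G : E × ℝ → ℝ) (x0 : E) (t0 : ℝ)
    (hG : ∀ᶠ p in 𝓝 (x0, t0), ContDiffAt ℝ (⊤ : ℕ∞) G p) (h0 : G (x0, t0) = 0)
    (h1 : fderiv ℝ G (x0, t0) (0, 1) ≠ 0) :
    ∃ φ : E → ℝ, φ x0 = t0 ∧ (∀ᶠ x in 𝓝 x0, ContDiffAt ℝ (⊤ : ℕ∞) φ x) ∧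
      ∀ᶠ x in 𝓝 x0, G (x, φ x) = 0 := by
  let H : E × ℝ → E × ℝ := fun p => (p.1, G p)
  have hH : ∀ p, ContDiffAt ℝ (⊤ : ℕ∞) G p → ContDiffAt ℝ (⊤ : ℕ∞) H p := fun p hp =>
    contDiffAt_fst.prodMk hp
  have hinv : ∀ p, ContDiffAt ℝ (⊤ : ℕ∞) G p → fderiv ℝ G p (0, 1) ≠ 0 →
      ∃ L : (E × ℝ) ≃L[ℝ] (E × ℝ), HasFDerivAt H (L : (E × ℝ) →L[ℝ] (E × ℝ)) p := by
    intro p hp hne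
    set L := fderiv ℝ G p with hL
    have hadd : ∀ v s, L (v, s) = L (v, 0) + s * L (0, 1) := by
      intro v s
      rw [← smul_eq_mul, ← map_smul, ← map_add]
      simp
    let A : (E × ℝ) →L[ℝ] (E × ℝ) := (ContinuousLinearMap.fst ℝ E ℝ).prod L
    let B : (E × ℝ) →L[ℝ] (E × ℝ) := (ContinuousLinearMap.fst ℝ E ℝ).prod
      ((L (0, 1))⁻¹ • (ContinuousLinearMap.snd ℝ E ℝ -
        (L.comp (ContinuousLinearMap.inl ℝ E ℝ)).comp (ContinuousLinearMap.fst ℝ E ℝ)))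
    refine ⟨ContinuousLinearEquiv.equivOfInverse A B ?_ ?_, ?_⟩
    · rintro ⟨v, s⟩
      simp only [A, B, ContinuousLinearMap.prod_apply]
      ext
      · simp
      · simp [hadd v s]
        field_simp
    · rintro ⟨v, s⟩
      simp only [A, B, ContinuousLinearMap.prod_apply]
      ext
      · simp
      · simp
        rw [hadd]
        field_simp
        ring
    · exact hasFDerivAt_fst.prodMk (hp.differentiableAt (by simp)).hasFDerivAt
  have hG0 := hG.self_of_nhds
  have hne : ∀ᶠ p in 𝓝 (x0, t0), fderiv ℝ G p (0, 1) ≠ 0 := by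
    have : ContinuousAt (fun p => fderiv ℝ G p (0, 1)) (x0, t0) :=
      ((hG0.fderiv_right (m := 0) (by simp)).continuousAt).clm_apply continuousAt_const
    exact this.eventually_ne h1
  obtain ⟨L, hL⟩ := hinv _ hG0 h1
  let e := (hH _ hG0).toOpenPartialHomeomorph H hL (by simp)
  have he : (e : E × ℝ → E × ℝ) = H := rfl
  have hs : (x0, t0) ∈ e.source := (hH _ hG0).mem_toOpenPartialHomeomorph_source hL (by simp)
  have hH0 : H (x0, t0) = (x0, 0) := by simp [H, h0]
  have ht : (x0, (0:ℝ)) ∈ e.target := by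
    rw [← hH0, ← he]; exact e.map_source hs
  have hsymm0 : e.symm (x0, 0) = (x0, t0) := by
    rw [← hH0, ← he]; exact e.left_inv hs
  have hev : ∀ᶠ y in 𝓝 (x0, (0:ℝ)), y ∈ e.target ∧ ContDiffAt ℝ (⊤ : ℕ∞) e.symm y := by
    have hc : Tendsto e.symm (𝓝 (x0, 0)) (𝓝 (x0, t0)) := by
      have := e.continuousAt_symm ht
      rwa [ContinuousAt, hsymm0] at this
    filter_upwards [e.open_target.mem_nhds ht, hc.eventually hG, hc.eventually hne] with y hy h2 h3
    refine ⟨hy, ?_⟩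
    obtain ⟨L', hL'⟩ := hinv _ h2 h3
    exact e.contDiffAt_symm hy hL' (hH _ h2)
  have hemb : Tendsto (fun x : E => (x, (0:ℝ))) (𝓝 x0) (𝓝 (x0, 0)) :=
    (Continuous.prodMk_left (0:ℝ)).tendsto x0
  refine ⟨fun x => (e.symm (x, 0)).2, by simp [hsymm0], ?_, ?_⟩
  · filter_upwards [hemb.eventually hev] with x hx
    have : ContDiffAt ℝ (⊤ : ℕ∞) (fun x : E => (x, (0:ℝ))) x := by fun_prop
    exact (hx.2.comp x this).snd
  · filter_upwards [hemb.eventually hev] with x hx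
    have h := e.right_inv hx.1
    rw [he] at h
    have h1 : (e.symm (x, 0)).1 = x := congrArg Prod.fst h
    have h2 : G (e.symm (x, 0)) = 0 := congrArg Prod.snd h
    have h3 : (x, (e.symm (x, 0)).2) = e.symm (x, 0) := Prod.ext h1.symm rfl
    change G (x, (e.symm (x, 0)).2) = 0
    rw [h3, h2]

lemma smoothGermsEval_mk {n : ℕ} (f : EuclideanSpace ℝ (Fin n) → ℝ)
    (h : Filter.Germ.ofFun f ∈ smoothGerms n) : smoothGermsEval n ⟨_, h⟩ = f 0 := rfl

lemma smoothGerms_isUnit {n : ℕ} (u : smoothGerms n) (hu : smoothGermsEval n u ≠ 0) :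
    IsUnit u := by
  obtain ⟨_, f, hf, rfl⟩ := u
  change f 0 ≠ 0 at hu
  have hne : ∀ᶠ x in 𝓝 0, f x ≠ 0 := hf.self_of_nhds.continuousAt.eventually_ne hu
  refine IsUnit.of_mul_eq_one
    (⟨Filter.Germ.ofFun fun x => (f x)⁻¹, fun x => (f x)⁻¹, ?_, rfl⟩ : smoothGerms n) ?_
  · filter_upwards [hf, hne] with x h1 h2 using h1.inv h2
  · apply Subtype.ext
    refine Filter.Germ.coe_eq.2 ?_
    filter_upwards [hne] with x h2
    exact mul_inv_cancel₀ h2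

lemma smoothGerms_hensel {n : ℕ} (F : Polynomial (smoothGerms n)) (a₀ : smoothGerms n)
    (h0 : smoothGermsEval n (F.eval a₀) = 0)
    (h1 : smoothGermsEval n (F.derivative.eval a₀) ≠ 0) :
    ∃ a, F.IsRoot a ∧ smoothGermsEval n (a - a₀) = 0 := by
  have hrep : ∀ u : smoothGerms n, ∃ f : EuclideanSpace ℝ (Fin n) → ℝ,
    (∀ᶠ x in 𝓝 (0 : EuclideanSpace ℝ (Fin n)), ContDiffAt ℝ (⊤ : ℕ∞) f x) ∧
      (u : Filter.Germ (𝓝 (0 : EuclideanSpace ℝ (Fin n))) ℝ) = Filter.Germ.ofFun f := fun u => u.2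
  choose rep hrep1 hrep2 using hrep
  have hrep0 : ∀ u, rep u 0 = smoothGermsEval n u := by
    intro u
    have : u = ⟨Filter.Germ.ofFun (rep u), rep u, hrep1 u, rfl⟩ := Subtype.ext (hrep2 u)
    conv_rhs => rw [this]
    rfl
  let N := F.natDegree + 1
  let G : EuclideanSpace ℝ (Fin n) × ℝ → ℝ := fun p =>
    ∑ i ∈ Finset.range N, rep (F.coeff i) p.1 * p.2 ^ i
  set t0 := smoothGermsEval n a₀ with ht0
  have hG0 : ∀ t, G (0, t) = (F.map (smoothGermsEval n)).eval t := by
    intro t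
    rw [Polynomial.eval_map, Polynomial.eval₂_eq_sum_range]
    simp [G, N, hrep0]
  have hGs : ∀ᶠ p in 𝓝 ((0 : EuclideanSpace ℝ (Fin n)), t0), ContDiffAt ℝ (⊤ : ℕ∞) G p := by
    have h : ∀ᶠ x in 𝓝 (0 : EuclideanSpace ℝ (Fin n)), ∀ i ∈ Finset.range N,
        ContDiffAt ℝ (⊤ : ℕ∞) (rep (F.coeff i)) x :=
      (Filter.eventually_all_finset _).2 fun i _ => hrep1 _
    filter_upwards [(continuous_fst.tendsto ((0 : EuclideanSpace ℝ (Fin n)), t0)).eventually h]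
      with p hp
    refine ContDiffAt.sum fun i hi => ?_
    exact ((hp i hi).comp p contDiffAt_fst).mul (contDiffAt_snd.pow i)
  have hd : fderiv ℝ G (0, t0) (0, 1) = smoothGermsEval n (F.derivative.eval a₀) := by
    have hg := (hGs.self_of_nhds.differentiableAt (by simp)).hasFDerivAt
    have h2 : HasDerivAt (fun t : ℝ => ((0 : EuclideanSpace ℝ (Fin n)), t)) (0, 1) t0 :=
      (hasDerivAt_const _ _).prodMk (hasDerivAt_id t0)
    have h3 := hg.comp_hasDerivAt t0 h2
    have h4 := (F.map (smoothGermsEval n)).hasDerivAt t0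
    have h5 : G ∘ (fun t : ℝ => ((0 : EuclideanSpace ℝ (Fin n)), t)) =
        fun t => (F.map (smoothGermsEval n)).eval t := funext hG0
    rw [h5] at h3
    rw [h3.unique h4, Polynomial.derivative_map, ht0, Polynomial.eval_map_apply]
  obtain ⟨φ, hφ0, hφ1, hφ2⟩ := ift_aux G 0 t0 hGs
    (by rw [hG0, ht0, Polynomial.eval_map_apply, h0]) (by rwa [hd])
  refine ⟨⟨Filter.Germ.ofFun φ, φ, hφ1, rfl⟩, ?_, ?_⟩
  · rw [Polynomial.IsRoot, Polynomial.eval_eq_sum_range]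
    apply Subtype.ext
    push_cast
    simp only [hrep2]
    have key : Filter.Germ.coeRingHom (𝓝 (0 : EuclideanSpace ℝ (Fin n)))
        (∑ i ∈ Finset.range N, rep (F.coeff i) * φ ^ i) = 0 := by
      refine Filter.Germ.coe_eq.2 ?_
      filter_upwards [hφ2] with x hx
      simpa [G] using hx
    rw [map_sum] at key
    simp only [map_mul, map_pow] at key
    exact key
  · rw [map_sub]
    change φ 0 - t0 = 0
    rw [hφ0, sub_self]

lemma glue_eq {n : ℕ} : (fun x : EuclideanSpace ℝ (Fin n) =>
    if x = 0 then (0:ℝ) else Real.exp (-1 / ‖x‖ ^ 2)) = fun x => expNegInvGlue (‖x‖ ^ 2) := by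
  funext x
  by_cases hx : x = 0
  · simp [hx]
  · have : 0 < ‖x‖ ^ 2 := by positivity
    simp [hx, expNegInvGlue, not_le.2 this, neg_div]

lemma glue_mem_pow {n : ℕ} (h : Filter.Germ.ofFun
    (fun x : EuclideanSpace ℝ (Fin n) => expNegInvGlue (‖x‖ ^ 2)) ∈ smoothGerms n) (r : ℕ)
    (hr : 1 ≤ r) :
    (⟨_, h⟩ : smoothGerms n) ∈ RingHom.ker (smoothGermsEval n) ^ r := by
  have hs : ContDiff ℝ (⊤ : ℕ∞) (fun x : EuclideanSpace ℝ (Fin n) => ‖x‖ ^ 2) :=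
    contDiff_norm_sq ℝ
  let q : smoothGerms n := ⟨Filter.Germ.ofFun fun x => ‖x‖ ^ 2, fun x => ‖x‖ ^ 2,
    Filter.Eventually.of_forall fun x => hs.contDiffAt, rfl⟩
  have hq : q ∈ RingHom.ker (smoothGermsEval n) := by
    rw [RingHom.mem_ker]
    change ‖(0 : EuclideanSpace ℝ (Fin n))‖ ^ 2 = 0
    simp
  let g : ℝ → ℝ := fun t => (Polynomial.X ^ r : Polynomial ℝ).eval t⁻¹ * expNegInvGlue t
  have hg : ContDiff ℝ (⊤ : ℕ∞) g := expNegInvGlue.contDiff_polynomial_eval_inv_mul _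
  let w : smoothGerms n := ⟨Filter.Germ.ofFun fun x => g (‖x‖ ^ 2), fun x => g (‖x‖ ^ 2),
    Filter.Eventually.of_forall fun x => (hg.comp hs).contDiffAt, rfl⟩
  have : (⟨_, h⟩ : smoothGerms n) = q ^ r * w := by
    apply Subtype.ext
    refine Filter.Germ.coe_eq.2 (Filter.Eventually.of_forall fun x => ?_)
    change expNegInvGlue (‖x‖ ^ 2) = (‖x‖ ^ 2) ^ r * g (‖x‖ ^ 2)
    by_cases hx : x = 0
    · simp [hx, g]
    · have : ‖x‖ ^ 2 ≠ 0 := by simpa using hx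
      simp only [g, Polynomial.eval_pow, Polynomial.eval_X]
      rw [← mul_assoc, ← mul_pow, mul_inv_cancel₀ this, one_pow, one_mul]
  rw [this]
  exact Ideal.mul_mem_right _ _ (Ideal.pow_mem_pow hq r)

/-- The ring `R` of germs at the origin of `C^∞` functions `ℝⁿ → ℝ`, together with the ideal
`I` of germs vanishing at the origin, forms a Henselian pair; moreover the germ of
`x ↦ exp (-1/‖x‖²)` (extended by `0` at the origin) is a nonzero element of `⋂_{r ≥ 1} I^r`,
so `R` is not `I`-adically separated. -/
theorem smoothGerms_henselianRing_and_not_separated (n : ℕ) (hn : 1 ≤ n) :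
    HenselianRing (smoothGerms n) (RingHom.ker (smoothGermsEval n)) ∧
    ∃ hmem : Filter.Germ.ofFun
        (fun x : EuclideanSpace ℝ (Fin n) =>
          if x = 0 then 0 else Real.exp (-1 / ‖x‖ ^ 2)) ∈ smoothGerms n,
      (⟨_, hmem⟩ : smoothGerms n) ≠ 0 ∧
      ∀ r : ℕ, 1 ≤ r →
        (⟨_, hmem⟩ : smoothGerms n) ∈ RingHom.ker (smoothGermsEval n) ^ r := by
  have hm : Filter.Germ.ofFun
    (fun x : EuclideanSpace ℝ (Fin n) => expNegInvGlue (‖x‖ ^ 2)) ∈ smoothGerms n :=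
    ⟨_, Filter.Eventually.of_forall fun x =>
      ((expNegInvGlue.contDiff (n := ⊤)).comp (contDiff_norm_sq ℝ)).contDiffAt, rfl⟩
  refine ⟨⟨?_, ?_⟩, ?_⟩
  · intro x hx
    rw [Ideal.mem_jacobson_bot]
    intro y
    apply smoothGerms_isUnit
    rw [RingHom.mem_ker] at hx
    simp [hx]
  · intro F _ a₀ h0 h1
    obtain ⟨a, ha, ha'⟩ := smoothGerms_hensel F a₀ h0 (by
      intro h
      rw [Ideal.Quotient.eq_zero_iff_mem.2 (RingHom.mem_ker.2 h), isUnit_zero_iff] at h1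
      have h2 : (1 : smoothGerms n) ∈ RingHom.ker (smoothGermsEval n) :=
        Ideal.Quotient.eq_zero_iff_mem.1 (by rw [map_one, h1])
      rw [RingHom.mem_ker, map_one] at h2
      exact one_ne_zero h2)
    exact ⟨a, ha, ha'⟩
  · rw [glue_eq]
    refine ⟨hm, ?_, fun r hr => glue_mem_pow hm r hr⟩
    intro h
    have h1 : (fun x : EuclideanSpace ℝ (Fin n) => expNegInvGlue (‖x‖ ^ 2)) =ᶠ[𝓝 0] fun _ => 0 :=
      Filter.Germ.coe_eq.1 (congrArg Subtype.val h)
    have : Nonempty (Fin n) := ⟨⟨0, hn⟩⟩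
    have h2 : ∀ᶠ x in 𝓝[≠] (0 : EuclideanSpace ℝ (Fin n)), False := by
      filter_upwards [h1.filter_mono nhdsWithin_le_nhds, self_mem_nhdsWithin] with x hx hx0
      have hx0' : x ≠ 0 := hx0
      have : 0 < ‖x‖ ^ 2 := by positivity
      exact (expNegInvGlue.pos_of_pos this).ne' hx
    obtain ⟨x, hx⟩ := h2.exists
    exact hx
end

section
/- Henselization is insensitive to étale extensions that are isomorphisms modulo the ideal: let R be a commutative ring with an ideal I, and let S be an étale R-algebra such that the induced map R/I → S/(I·S) is an isomorphism. If ρ : R → H exhibits H as a Henselization of the pair (R, I), then there exists a ring homomorphism σ : S → H with σ ∘ (R → S) = ρ which exhibits H as a Henselization of the pair (S, I·S). In particular, the Henselization of (R, I) is isomorphic as an R-algebra to the Henselization of (S, I·S). -/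
universe u

open Polynomial in
theorem hz_charpoly {A B : Type*} [CommRing A] [CommRing B] [Algebra A B] [Module.Finite A B]
    (I : Ideal A) (hI : I ≤ Ideal.jacobson ⊥) (b : B)
    (hb : b * b - b ∈ I.map (algebraMap A B))
    (hx : ∀ x : B, ∃ a : A, b * x - algebraMap A B a * b ∈ I.map (algebraMap A B)) :
    ∃ (n : ℕ) (f : A[X]), f.Monic ∧ aeval b f = 0 ∧
      f.map (Ideal.Quotient.mk I) = (X - 1) * X ^ n := by
  classical
  obtain ⟨n, y, hy⟩ := Module.Finite.exists_fin (R := A) (M := B)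
  let v : Option (Fin n) → B := fun o => o.elim b (fun i => (1 - b) * y i)
  have hmem : ∀ x : B, x ∈ I.map (algebraMap A B) ↔ x ∈ (I • ⊤ : Submodule A B) := by
    intro x; rw [Ideal.smul_top_eq_map]; rfl
  have hspan : Submodule.span A (Set.range v) = ⊤ := by
    rw [eq_top_iff]
    refine Submodule.le_of_le_smul_of_le_jacobson_bot Module.Finite.fg_top hI ?_
    rw [← hy, Submodule.span_le, hy]
    rintro _ ⟨i, rfl⟩
    obtain ⟨a, ha⟩ := hx (y i)
    have : y i = (a • v none + v (some i)) + (b * y i - algebraMap A B a * b) := by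
      simp only [v, Option.elim, Algebra.smul_def]; ring
    rw [SetLike.mem_coe, this]
    refine Submodule.add_mem_sup (add_mem (Submodule.smul_mem _ _ (Submodule.subset_span ⟨_, rfl⟩))
      (Submodule.subset_span ⟨_, rfl⟩)) ((hmem _).1 ha)
  let d : Option (Fin n) → A := fun o => o.elim 1 (fun _ => 0)
  have hd : ∀ j, ∃ c : Option (Fin n) → A, (∀ i, c i ∈ I) ∧
      ∑ i, c i • v i = b * v j - d j • v j := by
    intro j
    have h1 : b * v j - d j • v j ∈ I • Submodule.span A (Set.range v) := by
      rw [hspan, ← hmem]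
      cases j with
      | none => simpa [v, d] using hb
      | some i =>
        have : b * v (some i) - d (some i) • v (some i) = -(y i) * (b * b - b) := by
          simp only [v, d, Option.elim, zero_smul]; ring
        rw [this]
        exact Ideal.mul_mem_left _ _ hb
    rw [Submodule.mem_ideal_smul_span_iff_exists_sum] at h1
    obtain ⟨a, ha, h⟩ := h1
    refine ⟨a, ha, ?_⟩
    rw [← h, Finsupp.sum_fintype]
    simp
  choose c hcI hc using hd
  let M : Matrix (Option (Fin n)) (Option (Fin n)) A :=
    Matrix.of (fun i j => c j i) + Matrix.diagonal d
  have hM : M.Represents v (LinearMap.mulLeft A b) := by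
    rw [Matrix.represents_iff']
    intro j
    simp only [M, Matrix.add_apply, Matrix.of_apply, add_smul, Finset.sum_add_distrib, hc]
    simp [Matrix.diagonal_apply, ite_smul]
  let M' : Matrix.isRepresentation A v := ⟨M, _, hM⟩
  have hM' : Matrix.isRepresentation.toEnd A v hspan M' = LinearMap.mulLeft A b :=
    Matrix.isRepresentation.eq_toEnd_of_represents A v hspan M' hM
  refine ⟨n, M.charpoly, M.charpoly_monic, ?_, ?_⟩
  · have h0 : aeval M' M.charpoly = 0 := by
      apply Subtype.ext
      have := M.aeval_self_charpoly
      refine Eq.trans ?_ this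
      exact (Polynomial.aeval_algHom_apply (Matrix.isRepresentation A v).val M' M.charpoly).symm
    have h1 : aeval (LinearMap.mulLeft A b) M.charpoly = 0 := by
      rw [← hM', Polynomial.aeval_algHom_apply, h0, map_zero]
    have h2 : aeval (Algebra.lmul A B b) M.charpoly = 0 := h1
    rw [Polynomial.aeval_algHom_apply] at h2
    simpa using congr($h2 1)
  · rw [← Matrix.charpoly_map]
    have : M.map (Ideal.Quotient.mk I) = Matrix.diagonal (fun i => Ideal.Quotient.mk I (d i)) := by
      ext i j
      have := Ideal.Quotient.eq_zero_iff_mem.2 (hcI j i)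
      change Ideal.Quotient.mk I (c j i + Matrix.diagonal d i j) = _
      rw [map_add, this, zero_add]
      by_cases hij : i = j
      · subst hij; simp
      · simp [hij]
    rw [this, Matrix.charpoly_diagonal]
    simp [Fintype.prod_option, d]

theorem hz_isUnit {A : Type*} [CommRing A] {I : Ideal A} (hI : I ≤ Ideal.jacobson ⊥) {a : A}
    (ha : a - 1 ∈ I) : IsUnit a := by
  have := Ideal.mem_jacobson_bot.1 (hI ha) 1
  simpa using this

open Polynomial in
theorem hz_idem {A B : Type*} [CommRing A] [CommRing B] [Algebra A B] [Module.Finite A B]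
    (I : Ideal A) (hI : HenselianRing A I) (b : B)
    (hb : b * b - b ∈ I.map (algebraMap A B))
    (hx : ∀ x : B, ∃ a : A, b * x - algebraMap A B a * b ∈ I.map (algebraMap A B)) :
    ∃ (α : A) (e q : B), α - 1 ∈ I ∧ b * e = algebraMap A B α * e ∧
      e = 1 + (b - algebraMap A B α) * q := by
  obtain ⟨n, f, hf, hfb, hfI⟩ := hz_charpoly I hI.jac b hb hx
  have key : ∀ (p : A[X]) (a : A), Ideal.Quotient.mk I (p.eval a) =
      (p.map (Ideal.Quotient.mk I)).eval (Ideal.Quotient.mk I a) := by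
    intro p a; rw [eval_map, eval₂_at_apply]
  have hder : ∀ a : A, a - 1 ∈ I → Ideal.Quotient.mk I (f.derivative.eval a) = 1 := by
    intro a ha
    have : Ideal.Quotient.mk I a = 1 := by
      rw [← map_one (Ideal.Quotient.mk I), Ideal.Quotient.eq]; exact ha
    rw [key, ← derivative_map, hfI, this]
    simp
  obtain ⟨α, hα, hα1⟩ := hI.is_henselian f hf 1
    (by rw [← Ideal.Quotient.eq_zero_iff_mem, key, hfI]; simp)
    (by rw [hder 1 (by simp)]; exact isUnit_one)
  obtain ⟨g, hg⟩ := dvd_iff_isRoot.2 hα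
  have hgα : IsUnit (g.eval α) := by
    apply hz_isUnit hI.jac
    rw [← Ideal.Quotient.eq, map_one, ← hder α hα1, hg]
    simp
  obtain ⟨w, hw⟩ := hgα.exists_left_inv
  obtain ⟨r, hr⟩ := X_sub_C_dvd_sub_C_eval (a := α) (p := g)
  have h1 : (b - algebraMap A B α) * aeval b g = 0 := by
    rw [hg] at hfb; simpa using hfb
  have h2 : aeval b g = algebraMap A B (g.eval α) + (b - algebraMap A B α) * aeval b r := by
    have := congr(aeval b $hr)
    simp only [map_sub, map_mul, aeval_X, aeval_C] at this
    linear_combination this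
  have hw' : algebraMap A B w * algebraMap A B (g.eval α) = 1 := by rw [← map_mul, hw, map_one]
  refine ⟨α, algebraMap A B w * aeval b g, algebraMap A B w * aeval b r, hα1, ?_, ?_⟩
  · linear_combination algebraMap A B w * h1
  · linear_combination algebraMap A B w * h2 + hw'

theorem hz_unique {R S C : Type*} [CommRing R] [CommRing S] [Algebra R S] [CommRing C]
    [Algebra.Etale R S] (J : Ideal C) (hJ : J ≤ Ideal.jacobson ⊥) (u v : S →+* C)
    (h : u.comp (algebraMap R S) = v.comp (algebraMap R S)) (huv : ∀ s, u s - v s ∈ J) :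
    u = v := by
  let := (u.comp (algebraMap R S)).toAlgebra
  let u' : S →ₐ[R] C := ⟨u, fun _ => rfl⟩
  let v' : S →ₐ[R] C := ⟨v, fun r => (congr($h r)).symm⟩
  let w := Algebra.TensorProduct.lift u' v' (fun _ _ => Commute.all _ _)
  have hw : ∀ t, w t - u (Algebra.TensorProduct.lmul' R t) ∈ J := by
    intro t
    induction t using TensorProduct.induction_on with
    | zero => simp
    | tmul x y =>
      have : w (x ⊗ₜ y) - u (Algebra.TensorProduct.lmul' R (x ⊗ₜ[R] y)) = -u x * (u y - v y) := by
        simp [w, u', v']; ring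
      rw [this]; exact Ideal.mul_mem_left _ _ (huv y)
    | add x y hx hy =>
      have := add_mem hx hy
      simp only [map_add]
      convert this using 1; ring
  have h1 := hw (Algebra.FormallyUnramified.elem R S)
  rw [Algebra.FormallyUnramified.lmul_elem, map_one] at h1
  have hu := hz_isUnit hJ h1
  ext s
  have h2 := congr(w $(Algebra.FormallyUnramified.one_tmul_sub_tmul_one_mul_elem (R := R) s))
  rw [map_mul, map_zero, hu.mul_left_eq_zero] at h2
  simp [w, u', v'] at h2
  exact (sub_eq_zero.1 h2).symm

theorem hz_zmt {A S : Type*} [CommRing A] [CommRing S] [Algebra A S] [Algebra.Etale A S]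
    (I : Ideal A) (hs : ∀ x : S, ∃ a : A, x - algebraMap A S a ∈ I.map (algebraMap A S)) :
    ∃ c : S, c - 1 ∈ I.map (algebraMap A S) ∧ ∀ x : S, ∃ m : ℕ, IsIntegral A (c ^ m * x) := by
  let B := integralClosure A S
  let K : Ideal B := ⨅ x : S, Ideal.radical
    (Submodule.comap (LinearMap.toSpanSingleton B S x) (LinearMap.range (Algebra.linearMap B S)))
  have hK : ∀ c : B, c ∈ K ↔ ∀ x : S, ∃ m : ℕ, IsIntegral A ((c : S) ^ m * x) := by
    intro c
    simp only [K, Submodule.mem_iInf]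
    refine forall_congr' fun x => exists_congr fun m => ?_
    rw [Submodule.mem_comap, LinearMap.mem_range, LinearMap.toSpanSingleton_apply]
    constructor
    · rintro ⟨y, hy⟩
      have h2 : (c : S) ^ m * x = (y : S) := by
        rw [show (y : S) = Algebra.linearMap B S y from rfl, hy, Algebra.smul_def, map_pow]; rfl
      rw [h2]; exact y.2
    · intro h
      refine ⟨⟨_, h⟩, ?_⟩
      rw [Algebra.smul_def, map_pow]; rfl
  have htop : K.map (algebraMap B S) = ⊤ := by
    by_contra hne
    obtain ⟨p, hp, hle⟩ := Ideal.exists_le_maximal _ hne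
    have := hp.isPrime
    have hz : Algebra.ZariskisMainProperty A p := Algebra.ZariskisMainProperty.of_finiteType p
    obtain ⟨r, hrp, hr, H⟩ := Algebra.zariskisMainProperty_iff.1 hz
    exact hrp (hle (Ideal.mem_map_of_mem (algebraMap B S) (x := ⟨r, hr⟩) ((hK _).2 H)))
  have hall : ∀ y ∈ K.map (algebraMap B S), ∃ c ∈ K, (c : S) - y ∈ I.map (algebraMap A S) := by
    intro y hy
    induction hy using Submodule.span_induction with
    | mem y hy => obtain ⟨c, hc, rfl⟩ := hy; exact ⟨c, hc, by
        rw [show algebraMap B S c = (c : S) from rfl, sub_self]; exact zero_mem _⟩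
    | zero => exact ⟨0, zero_mem _, by simp⟩
    | add y z _ _ hy hz =>
      obtain ⟨c, hc, h⟩ := hy
      obtain ⟨d, hd, h'⟩ := hz
      refine ⟨c + d, add_mem hc hd, ?_⟩
      have := add_mem h h'
      convert this using 1
      push_cast; ring
    | smul s y _ hy =>
      obtain ⟨c, hc, h⟩ := hy
      obtain ⟨a, ha⟩ := hs s
      refine ⟨algebraMap A B a * c, Ideal.mul_mem_left _ _ hc, ?_⟩
      have := sub_mem (Ideal.mul_mem_left _ (algebraMap A S a) h) (Ideal.mul_mem_left _ y ha)
      convert this using 1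
      rw [smul_eq_mul]
      push_cast
      ring
  obtain ⟨c, hc, h⟩ := hall 1 (by rw [htop]; trivial)
  exact ⟨c, h, (hK c).1 hc⟩

theorem hz_finite {A S : Type*} [CommRing A] [CommRing S] [Algebra A S] [Algebra.FiniteType A S]
    (c : S) (hc : ∀ x : S, ∃ m : ℕ, IsIntegral A (c ^ m * x)) :
    ∃ B : Subalgebra A S, Module.Finite A B ∧ c ∈ B ∧ ∀ x : S, ∃ m : ℕ, c ^ m * x ∈ B := by
  obtain ⟨s, hs⟩ := Algebra.FiniteType.out (R := A) (A := S)
  have hci : IsIntegral A c := by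
    obtain ⟨n, hn⟩ := hc c
    rw [← pow_succ] at hn
    exact (IsIntegral.pow_iff (by simp)).mp hn
  choose m hm using hc
  let t := insert c { c ^ m x * x | x ∈ s }
  have hct : c ∈ Algebra.adjoin A t := Algebra.subset_adjoin (by simp [t])
  refine ⟨Algebra.adjoin A t, ?_, hct, ?_⟩
  · refine ⟨(Submodule.fg_top _).2 (fg_adjoin_of_finite ?_ ?_)⟩
    · simp only [t, Set.finite_insert]
      exact s.finite_toSet.image (fun x ↦ c ^ m x * x)
    · rintro a (rfl | ⟨x, hx, rfl⟩); exacts [hci, hm _]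
  · have : ⊤ ≤ (Algebra.adjoin A t).saturation (.powers c) (by simpa [Submonoid.powers_le]) := by
      rw [← hs, Algebra.adjoin_le_iff]
      intro x hx
      exact ⟨_, ⟨m x, rfl⟩, Algebra.subset_adjoin (Set.mem_insert_of_mem _ ⟨x, hx, rfl⟩)⟩
    intro x
    obtain ⟨_, ⟨k, rfl⟩, hk⟩ := this (Algebra.mem_top (x := x))
    exact ⟨k, hk⟩

theorem hz_pow_mem {A S : Type*} [CommRing A] [CommRing S] [Algebra A S] (I : Ideal A)
    (c : S) (B : Subalgebra A S) (hcB : c ∈ B) (hc : ∀ x : S, ∃ m : ℕ, c ^ m * x ∈ B)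
    (x : S) (hx : x ∈ I.map (algebraMap A S)) :
    ∃ m : ℕ, ∃ y : B, y ∈ I.map (algebraMap A B) ∧ (y : S) = c ^ m * x := by
  induction hx using Submodule.span_induction with
  | mem y hy =>
    obtain ⟨a, ha, rfl⟩ := hy
    exact ⟨0, algebraMap A B a, Ideal.mem_map_of_mem _ ha, by simp⟩
  | zero => exact ⟨0, 0, zero_mem _, by simp⟩
  | add y z _ _ hy hz =>
    obtain ⟨m, y', hy, h⟩ := hy
    obtain ⟨n, z', hz, h'⟩ := hz
    refine ⟨m + n, ⟨c, hcB⟩ ^ n * y' + ⟨c, hcB⟩ ^ m * z',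
      add_mem (Ideal.mul_mem_left _ _ hy) (Ideal.mul_mem_left _ _ hz), ?_⟩
    push_cast
    rw [h, h']; ring
  | smul s y _ hy =>
    obtain ⟨m, y', hy, h⟩ := hy
    obtain ⟨n, hn⟩ := hc s
    refine ⟨m + n, ⟨_, hn⟩ * y', Ideal.mul_mem_left _ _ hy, ?_⟩
    push_cast
    rw [h, smul_eq_mul]; ring

theorem hz_section {A S : Type*} [CommRing A] [CommRing S] [Algebra A S] [Algebra.Etale A S]
    (I : Ideal A) (hI : HenselianRing A I) (s : S →ₐ[A] A ⧸ I)
    (hs : ∀ x, s x = 0 → x ∈ I.map (algebraMap A S)) : Nonempty (S →ₐ[A] A) := by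
  have hs' : ∀ x : S, ∃ a : A, x - algebraMap A S a ∈ I.map (algebraMap A S) := by
    intro x
    obtain ⟨a, ha⟩ := Ideal.Quotient.mk_surjective (s x)
    refine ⟨a, hs _ ?_⟩
    rw [map_sub, AlgHom.commutes, ← ha]
    exact sub_self _
  have hs0 : ∀ x ∈ I.map (algebraMap A S), s x = 0 := by
    intro x hx
    have : I.map (algebraMap A S) ≤ RingHom.ker s := by
      rw [Ideal.map_le_iff_le_comap]
      intro a ha
      rw [Ideal.mem_comap, RingHom.mem_ker, AlgHom.commutes]
      exact Ideal.Quotient.eq_zero_iff_mem.2 ha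
    exact this hx
  obtain ⟨c, hc1, hci⟩ := hz_zmt I hs'
  obtain ⟨B, hBfin, hcB, hc⟩ := hz_finite c hci
  let IB := I.map (algebraMap A B)
  let c' : B := ⟨c, hcB⟩
  obtain ⟨k, y, hyI, hy⟩ := hz_pow_mem I c B hcB hc _ hc1
  let b : B := c' ^ k
  have hbc : b * c' - b ∈ IB := by
    have : b * c' - b = y := by
      apply Subtype.ext
      rw [hy]
      simp [b, c']; ring
    rw [this]; exact hyI
  have hbcl : ∀ l, b * c' ^ l - b ∈ IB := by
    intro l
    induction l with
    | zero => simp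
    | succ l ih =>
      have := add_mem (Ideal.mul_mem_left _ c' ih) hbc
      convert this using 1; ring
  have hbx : ∀ x : B, ∃ a : A, b * x - algebraMap A B a * b ∈ IB := by
    intro x
    obtain ⟨a, ha⟩ := hs' x
    obtain ⟨l, z, hz, hzl⟩ := hz_pow_mem I c B hcB hc _ ha
    refine ⟨a, ?_⟩
    have hz' : z = c' ^ l * (x - algebraMap A B a) := by
      apply Subtype.ext; rw [hzl]; simp [c']
    have := sub_mem (Ideal.mul_mem_left _ b hz)
      (Ideal.mul_mem_left _ (x - algebraMap A B a) (hbcl l))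
    convert this using 1
    rw [hz']; ring
  obtain ⟨α, e, q, hα, hbe, heq⟩ := hz_idem I hI b (hbcl k) hbx
  have hαu := hz_isUnit hI.jac hα
  obtain ⟨β, hβ⟩ := hαu.exists_left_inv
  have hβ' : algebraMap A B β * algebraMap A B α = 1 := by rw [← map_mul, hβ, map_one]
  have hee : e * e = e := by
    nth_rw 1 [heq]
    linear_combination q * hbe
  -- Nakayama
  have hmem : ∀ x : B, x ∈ IB ↔ x ∈ (I • ⊤ : Submodule A B) := by
    intro x; rw [Ideal.smul_top_eq_map]; rfl
  let N : Submodule A B := LinearMap.range (LinearMap.mulLeft A e)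
  have hNfg : N.FG := by
    have := (Module.Finite.fg_top (R := A) (M := B)).map (LinearMap.mulLeft A e)
    rwa [Submodule.map_top] at this
  have heIB : ∀ x ∈ IB, e * x ∈ I • N := by
    intro x hx
    have h1 : e * x ∈ (I • (⊤ : Submodule A B)).map (LinearMap.mulLeft A e) :=
      ⟨x, (hmem x).1 hx, rfl⟩
    rwa [Submodule.map_smul'', Submodule.map_top] at h1
  have hN : N ≤ Submodule.span A {e} := by
    refine Submodule.le_of_le_smul_of_le_jacobson_bot hNfg hI.jac ?_
    rintro _ ⟨x, rfl⟩
    obtain ⟨a, ha⟩ := hbx x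
    have : LinearMap.mulLeft A e x = a • e + β • (e * (b * x - algebraMap A B a * b)) := by
      simp only [LinearMap.mulLeft_apply, Algebra.smul_def]
      linear_combination (-algebraMap A B β * x + algebraMap A B β * algebraMap A B a) * hbe
        - (e * x - algebraMap A B a * e) * hβ'
    rw [this]
    exact Submodule.add_mem_sup (Submodule.smul_mem _ _ (Submodule.mem_span_singleton_self e))
      (Submodule.smul_mem _ _ (heIB _ ha))
  have heB : ∀ x : B, ∃ a : A, e * x = algebraMap A B a * e := by
    intro x
    obtain ⟨a, ha⟩ := Submodule.mem_span_singleton.1 (hN ⟨x, rfl⟩)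
    exact ⟨a, by rw [← Algebra.smul_def, ha]; rfl⟩
  have heI : ∀ x ∈ IB, ∃ i ∈ I, e * x = algebraMap A B i * e := by
    intro x hx
    have h1 := Submodule.smul_mono le_rfl hN (heIB x hx)
    obtain ⟨i, hi, h⟩ := Submodule.mem_smul_span_singleton.1 h1
    exact ⟨i, hi, by rw [← Algebra.smul_def, h]⟩
  -- `e * c = unit * e`
  obtain ⟨i, hi, hic⟩ := heI _ hbc
  have hec : e * c' = algebraMap A B (1 + β * i) * e := by
    rw [map_add, map_mul, map_one]
    linear_combination algebraMap A B β * hic - algebraMap A B β * (c' - 1) * hbe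
      - (e * c' - e) * hβ'
  have hu : IsUnit (1 + β * i) := by
    apply hz_isUnit hI.jac
    rw [add_sub_cancel_left]
    exact Ideal.mul_mem_left _ _ hi
  obtain ⟨w, hw⟩ := hu.exists_left_inv
  have hw' : algebraMap A S w * algebraMap A S (1 + β * i) = 1 := by rw [← map_mul, hw, map_one]
  have hecS : (e : S) * c = algebraMap A S (1 + β * i) * e := congr(($hec : S))
  have heS : ∀ x : S, ∃ a : A, (e : S) * x = algebraMap A S a * e := by
    intro x
    obtain ⟨l, hl⟩ := hc x
    clear_value b c'
    induction l generalizing x with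
    | zero =>
      obtain ⟨a, ha⟩ := heB ⟨x, by simpa using hl⟩
      exact ⟨a, congr(($ha : S))⟩
    | succ l ih =>
      obtain ⟨a, ha⟩ := ih (c * x) (by rw [← mul_assoc, ← pow_succ]; exact hl)
      refine ⟨w * a, ?_⟩
      rw [map_mul]
      linear_combination algebraMap A S w * ha - algebraMap A S w * x * hecS - e * x * hw'
  have hse : s e = 1 := by
    have hsc : s c = 1 := by
      have := hs0 _ hc1
      rwa [map_sub, map_one, sub_eq_zero] at this
    have h1 : (e : S) = 1 + (c ^ k - algebraMap A S α) * q := congr(($heq : S))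
    have h2 : algebraMap A (A ⧸ I) α = 1 := by
      have := Ideal.Quotient.eq.2 hα
      rwa [map_one] at this
    rw [h1]
    simp only [map_add, map_mul, map_sub, map_pow, hsc, AlgHom.commutes, h2]
    simp
  have heeS : (e : S) * e = e := congr(($hee : S))
  -- localize
  let T := Localization.Away (e : S)
  have : Algebra.Etale S T := Algebra.Etale.of_isLocalizationAway (e : S)
  have : Algebra.Etale A T := Algebra.Etale.comp A S T
  have hu1 : algebraMap S T e = 1 := by
    have h1 : IsUnit (algebraMap S T e) := IsLocalization.Away.algebraMap_isUnit (e : S)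
    have h2 : algebraMap S T e * algebraMap S T e = algebraMap S T e := by
      rw [← map_mul, heeS]
    exact h1.mul_left_cancel (by rw [h2, mul_one])
  have hTS : ∀ x : S, ∃ a : A, algebraMap S T x = algebraMap A T a := by
    intro x
    obtain ⟨a, ha⟩ := heS x
    have := congr(algebraMap S T $ha)
    rw [map_mul, map_mul, hu1, one_mul, mul_one, ← IsScalarTower.algebraMap_apply] at this
    exact ⟨a, this⟩
  have hsurj : Function.Surjective (algebraMap A T) := by
    intro t
    obtain ⟨n, x, hx⟩ := IsLocalization.Away.surj (e : S) t
    rw [hu1, one_pow, mul_one] at hx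
    obtain ⟨a, ha⟩ := hTS x
    exact ⟨a, by rw [hx, ha]⟩
  have hid := (Algebra.FormallyEtale.iff_of_surjective hsurj).1 inferInstance
  have hkI : RingHom.ker (algebraMap A T) ≤ I := by
    intro a ha
    rw [RingHom.mem_ker, IsScalarTower.algebraMap_apply A S T,
      IsLocalization.map_eq_zero_iff (Submonoid.powers (e : S))] at ha
    obtain ⟨⟨_, n, rfl⟩, h⟩ := ha
    have := congr(s $h)
    simp only [map_mul, map_pow, hse, one_pow, one_mul, AlgHom.commutes, map_zero] at this
    exact Ideal.Quotient.eq_zero_iff_mem.1 this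
  have hkfg : (RingHom.ker (algebraMap A T)).FG :=
    Algebra.FinitePresentation.ker_fG_of_surjective (Algebra.ofId A T) hsurj
  have hk0 : RingHom.ker (algebraMap A T) = ⊥ := by
    refine Submodule.eq_bot_of_le_smul_of_le_jacobson_bot I _ hkfg ?_ hI.jac
    exact hid.eq.ge.trans (Ideal.mul_mono_left hkI)
  have hinj : Function.Injective (algebraMap A T) := (RingHom.injective_iff_ker_eq_bot _).2 hk0
  let E : A ≃ₐ[A] T := AlgEquiv.ofBijective (Algebra.ofId A T) ⟨hinj, hsurj⟩
  exact ⟨E.symm.toAlgHom.comp (IsScalarTower.toAlgHom A S T)⟩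


theorem hz_sigma {R S H : Type u} [CommRing R] [CommRing S] [Algebra R S] [CommRing H]
    (I : Ideal R) [Algebra.Etale R S]
    (hiso : Function.Bijective (Ideal.quotientMap (I.map (algebraMap R S)) (algebraMap R S)
      Ideal.le_comap_map))
    (ρ : R →+* H) (hH : HenselianRing H (I.map ρ)) :
    ∃ σ : S →+* H, σ.comp (algebraMap R S) = ρ := by
  let := ρ.toAlgebra
  let E := RingEquiv.ofBijective _ hiso
  let ψ : S →+* H ⧸ I.map ρ := ((Ideal.quotientMap (I.map ρ) ρ Ideal.le_comap_map).comp
    E.symm.toRingHom).comp (Ideal.Quotient.mk (I.map (algebraMap R S)))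
  have hψ : ∀ r, ψ (algebraMap R S r) = Ideal.Quotient.mk (I.map ρ) (ρ r) := by
    intro r
    have : E.symm (Ideal.Quotient.mk (I.map (algebraMap R S)) (algebraMap R S r)) =
        Ideal.Quotient.mk I r := by
      rw [RingEquiv.symm_apply_eq]
      simp [E]
    change Ideal.quotientMap (I.map ρ) ρ Ideal.le_comap_map (E.symm (Ideal.Quotient.mk _ (algebraMap R S r))) = _
    rw [this, Ideal.quotientMap_mk]
  let ψ' : S →ₐ[R] H ⧸ I.map ρ := ⟨ψ, hψ⟩
  let s : TensorProduct R H S →ₐ[H] H ⧸ I.map ρ :=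
    Algebra.TensorProduct.lift (Algebra.ofId H _) ψ' (fun _ _ => Commute.all _ _)
  let IT := (I.map ρ).map (algebraMap H (TensorProduct R H S))
  have hIT : ∀ x ∈ I.map (algebraMap R S), (1 : H) ⊗ₜ[R] x ∈ IT := by
    intro x hx
    have : I.map (algebraMap R S) ≤
        IT.comap (Algebra.TensorProduct.includeRight : S →ₐ[R] TensorProduct R H S) := by
      rw [Ideal.map_le_iff_le_comap]
      intro a ha
      rw [Ideal.mem_comap, Ideal.mem_comap, AlgHom.commutes,
        IsScalarTower.algebraMap_apply R H (TensorProduct R H S)]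
      exact Ideal.mem_map_of_mem _ (Ideal.mem_map_of_mem _ ha)
    exact this hx
  have hs1 : ∀ x : TensorProduct R H S, ∃ a : H, x - algebraMap H _ a ∈ IT := by
    intro x
    induction x using TensorProduct.induction_on with
    | zero => exact ⟨0, by simp⟩
    | tmul h y =>
      obtain ⟨r, hr⟩ := hiso.2 (Ideal.Quotient.mk _ y)
      obtain ⟨r, rfl⟩ := Ideal.Quotient.mk_surjective r
      rw [Ideal.quotientMap_mk, eq_comm, Ideal.Quotient.eq] at hr
      refine ⟨h * ρ r, ?_⟩
      have h1 := Ideal.mul_mem_left IT (h ⊗ₜ[R] (1 : S)) (hIT _ hr)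
      have h2 : (h * ρ r) ⊗ₜ[R] (1 : S) = h ⊗ₜ[R] algebraMap R S r := by
        rw [Algebra.algebraMap_eq_smul_one, ← TensorProduct.smul_tmul, Algebra.smul_def, mul_comm]
        rfl
      rw [Algebra.TensorProduct.algebraMap_apply, Algebra.algebraMap_self, RingHom.id_apply, h2]
      rw [Algebra.TensorProduct.tmul_mul_tmul, mul_one, one_mul, TensorProduct.tmul_sub] at h1
      exact h1
    | add x y hx hy =>
      obtain ⟨a, ha⟩ := hx
      obtain ⟨b, hb⟩ := hy
      refine ⟨a + b, ?_⟩
      have := add_mem ha hb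
      convert this using 1
      rw [map_add]; ring
  have hle : ∀ x ∈ IT, s x = 0 := by
    intro x hx
    have : IT ≤ RingHom.ker s := by
      rw [Ideal.map_le_iff_le_comap]
      intro a ha
      rw [Ideal.mem_comap, RingHom.mem_ker, AlgHom.commutes]
      exact Ideal.Quotient.eq_zero_iff_mem.2 ha
    exact this hx
  obtain ⟨φ⟩ := hz_section (I.map ρ) hH s (by
    intro x hx
    obtain ⟨a, ha⟩ := hs1 x
    have h1 := hle _ ha
    rw [map_sub, hx, zero_sub, neg_eq_zero, AlgHom.commutes] at h1
    have h2 : a ∈ I.map ρ := Ideal.Quotient.eq_zero_iff_mem.1 h1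
    have := add_mem ha (Ideal.mem_map_of_mem (algebraMap H (TensorProduct R H S)) h2)
    rwa [sub_add_cancel] at this)
  refine ⟨(φ.restrictScalars R |>.comp Algebra.TensorProduct.includeRight).toRingHom, ?_⟩
  ext r
  exact AlgHom.commutes (φ.restrictScalars R |>.comp Algebra.TensorProduct.includeRight) r

/-- Henselization is insensitive to étale extensions that are isomorphisms modulo the ideal:
if `S` is étale over `R` with `R/I ≅ S/IS` and `ρ : R → H` is a Henselization of `(R, I)`,
then `ρ` factors through `S` via a map exhibiting `H` as a Henselization of `(S, I·S)`. -/
theorem isHenselization_of_etale_iso_mod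
    {R S H : Type u} [CommRing R] [CommRing S] [Algebra R S] [CommRing H]
    (I : Ideal R) [Algebra.Etale R S]
    (hiso : Function.Bijective (Ideal.quotientMap (I.map (algebraMap R S)) (algebraMap R S)
      Ideal.le_comap_map))
    (ρ : R →+* H) (hρ : IsHenselization I ρ) :
    ∃ σ : S →+* H, σ.comp (algebraMap R S) = ρ ∧
      IsHenselization (I.map (algebraMap R S)) σ := by
  obtain ⟨σ, hσ⟩ := hz_sigma I hiso ρ hρ.1
  refine ⟨σ, hσ, ?_, ?_⟩
  · rw [Ideal.map_map, hσ]; exact hρ.1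
  · intro C _ J hJ f hf
    rw [Ideal.map_map] at hf
    obtain ⟨g, hg, hgu⟩ := hρ.2 C J hJ (f.comp (algebraMap R S)) hf
    refine ⟨g, ?_, ?_⟩
    · refine hz_unique (R := R) J hJ.jac _ _ (by rw [RingHom.comp_assoc, hσ]; exact hg) ?_
      intro x
      obtain ⟨r, hr⟩ := hiso.2 (Ideal.Quotient.mk _ x)
      obtain ⟨r, rfl⟩ := Ideal.Quotient.mk_surjective r
      rw [Ideal.quotientMap_mk, eq_comm, Ideal.Quotient.eq] at hr
      have h1 : g.comp σ (x - algebraMap R S r) ∈ J := by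
        have : (I.map (algebraMap R S)).map (g.comp σ) ≤ J := by
          rw [Ideal.map_map, RingHom.comp_assoc, hσ, hg]; exact hf
        exact this (Ideal.mem_map_of_mem _ hr)
      have h2 : f (x - algebraMap R S r) ∈ J := by
        have : (I.map (algebraMap R S)).map f ≤ J := by
          rw [Ideal.map_map]; exact hf
        exact this (Ideal.mem_map_of_mem _ hr)
      have h3 : g.comp σ (algebraMap R S r) = f (algebraMap R S r) := by
        have h4 : σ (algebraMap R S r) = ρ r := congr($hσ r)
        rw [RingHom.comp_apply, h4]
        exact congr($hg r)
      have := sub_mem h1 h2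
      rw [map_sub, map_sub, h3] at this
      simpa using this
    · intro g' hg'
      refine hgu g' ?_
      change g'.comp ρ = _
      rw [← hσ, ← RingHom.comp_assoc]
      exact congr(RingHom.comp $hg' (algebraMap R S))
end
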